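/- Extension into a weighted Sobolev space (converse estimate): Let n, d ∈ ℕ, p ∈ (1,∞), r ∈ [1,p), l ∈ ℕ with l > d/r, and let γ be a weight on ℝ^{n+d} with γ^p ∈ A^{loc}_{p/r}(ℝ^{n+d}). Define γ̂_{k,m} := ‖γ‖_{L_p(Ξ^{d,n}_{k,m})} and γ_k(x) := 2^{k(l + n/p)}·Σ_{m∈ℤⁿ} χ_{Q̃^n_{k,m}}(x)·γ̂_{k,m}. Then for every φ ∈ B̃^l_{p,p,r}(ℝⁿ,{γ_k}) there exists f ∈ W^l_p(ℝ^{n+d},γ) such that φ = tr|_{y=0} f and ‖f | W^l_p(ℝ^{n+d},γ)‖ ≤ C·‖φ | B̃^l_{p,p,r}(ℝⁿ,{γ_k})‖ with C independent of φ. -/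

import Mathlib

open MeasureTheory ENNReal Filter
open scoped Classical

noncomputable section

/-- `ℓ_q` quasinorm of a family of extended nonnegative reals (supremum when `q = ∞`). -/
def lqNorm {ι : Type*} (q : ℝ≥0∞) (c : ι → ℝ≥0∞) : ℝ≥0∞ :=
  if q = ∞ then ⨆ i, c i else (∑' i, c i ^ q.toReal) ^ (1 / q.toReal)

/-- `L_p` quasinorm of an `ℝ≥0∞`-valued function (essential supremum when `p = ∞`). -/
def lpNormE {α : Type*} [MeasurableSpace α] (p : ℝ≥0∞) (μ : Measure α) (f : α → ℝ≥0∞) : ℝ≥0∞ :=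
  if p = ∞ then essSup f μ else (∫⁻ x, f x ^ p.toReal ∂μ) ^ (1 / p.toReal)

abbrev Rn (n : ℕ) := Fin n → ℝ

/-- Open cube centred at `x` of half-side `s` (i.e. `x + s·Iⁿ`). -/
def openCube {n : ℕ} (x : Rn n) (s : ℝ) : Set (Rn n) := {y | ∀ i, |y i - x i| < s}

/-- Open axis-parallel cube with lower corner `c` and side `s`. -/
def cubeAt {n : ℕ} (c : Rn n) (s : ℝ) : Set (Rn n) := {x | ∀ i, c i < x i ∧ x i < c i + s}

/-- Open dyadic cube `Q^n_{k,m}` of side `2^{-k}`. -/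
def dyadicCube (n k : ℕ) (m : Fin n → ℤ) : Set (Rn n) :=
  {x | ∀ i, (m i : ℝ) / 2 ^ k < x i ∧ x i < ((m i : ℝ) + 1) / 2 ^ k}

/-- Half-open dyadic cube `Q̃^n_{k,m}`. -/
def dyadicCubeHalf (n k : ℕ) (m : Fin n → ℤ) : Set (Rn n) :=
  {x | ∀ i, (m i : ℝ) / 2 ^ k ≤ x i ∧ x i < ((m i : ℝ) + 1) / 2 ^ k}

def dyadicCenter (n k : ℕ) (m : Fin n → ℤ) : Rn n := fun i => ((m i : ℝ) + 1 / 2) / 2 ^ k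

/-- The concentric dilate `c·Q^n_{k,m}` of a dyadic cube. -/
def dilatedCube (n k : ℕ) (m : Fin n → ℤ) (c : ℝ) : Set (Rn n) :=
  openCube (dyadicCenter n k m) (c / 2 ^ (k + 1))

def euclNorm {d : ℕ} (y : Rn d) : ℝ := Real.sqrt (∑ i, y i ^ 2)

/-- The difference `Δ^l(h)g(x)`. -/
def diffl {n : ℕ} (l : ℕ) (h : Rn n) (g : Rn n → ℝ) (x : Rn n) : ℝ :=
  ∑ j ∈ Finset.range (l + 1), ((l.choose j : ℝ) * (-1 : ℝ) ^ (l + j)) * g (x + (j : ℝ) • h)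

/-- The difference `Δ^l(h,Ω)g(x)`, vanishing unless the segment `[x, x + l·h]` lies in `Ω`. -/
def difflOn {n : ℕ} (l : ℕ) (Ω : Set (Rn n)) (h : Rn n) (g : Rn n → ℝ) (x : Rn n) : ℝ :=
  if ∀ τ ∈ Set.Icc (0 : ℝ) 1, x + (τ * l) • h ∈ Ω then diffl l h g x else 0

/-- `δ^l_r(Q)g`, where `s` is the side length of the cube `Q`. -/
def deltaE (n l : ℕ) (r : ℝ≥0∞) (s : ℝ) (Q : Set (Rn n)) (g : Rn n → ℝ) : ℝ≥0∞ :=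
  ENNReal.ofReal s ^ (-(2 * (n : ℝ)) / r.toReal) *
    eLpNorm (fun hx : Rn n × Rn n => diffl l hx.1 g hx.2) r
      ((volume.restrict (openCube (0 : Rn n) s)).prod (volume.restrict Q))

/-- `δ^l_r(Q,Ω)g`, where `s` is the side length of the cube `Q`. -/
def deltaEOn (n l : ℕ) (r : ℝ≥0∞) (s : ℝ) (Q Ω : Set (Rn n)) (g : Rn n → ℝ) : ℝ≥0∞ :=
  ENNReal.ofReal s ^ (-(2 * (n : ℝ)) / r.toReal) *
    eLpNorm (fun hx : Rn n × Rn n => difflOn l Ω hx.1 g hx.2) r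
      ((volume.restrict (openCube (0 : Rn n) s)).prod (volume.restrict Q))

/-- `Δ̄^l_r(s)g(x)`. -/
def barDelta (n l : ℕ) (r : ℝ≥0∞) (s : ℝ) (g : Rn n → ℝ) (x : Rn n) : ℝ≥0∞ :=
  ENNReal.ofReal s ^ (-(n : ℝ) / r.toReal) *
    eLpNorm (fun h : Rn n => diffl l h g x) r (volume.restrict (openCube (0 : Rn n) s))

/-- Membership in `L_r^{loc}(ℝⁿ)`. -/
def MemLrLoc (n : ℕ) (r : ℝ≥0∞) (φ : Rn n → ℝ) : Prop :=
  Measurable φ ∧ ∀ K : Set (Rn n), IsCompact K → eLpNorm φ r (volume.restrict K) < ∞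

def IsWeight {n : ℕ} (w : Rn n → ℝ) : Prop := Measurable w ∧ ∀ x, 0 < w x

/-- A `p`-admissible weight sequence. -/
def pAdmissible (n : ℕ) (p : ℝ≥0∞) (t : ℕ → Rn n → ℝ) : Prop :=
  ∀ k, IsWeight (t k) ∧ MemLrLoc n p (t k)

/-- The multiple sequence `t_{k,m} = ‖t_k‖_{L_p(Q^n_{k,m})}` associated with a weight sequence. -/
def tkm (n : ℕ) (p : ℝ≥0∞) (t : ℕ → Rn n → ℝ) (k : ℕ) (m : Fin n → ℤ) : ℝ≥0∞ :=
  eLpNorm (t k) p (volume.restrict (dyadicCube n k m))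

/-- The weight `t̄_k` built from a multiple sequence `T`. -/
def tbarOf (n : ℕ) (p : ℝ≥0∞) (T : ℕ → (Fin n → ℤ) → ℝ≥0∞) (k : ℕ) (x : Rn n) : ℝ≥0∞ :=
  (2 : ℝ≥0∞) ^ (((k * n : ℕ) : ℝ) / p.toReal) *
    ∑' m : Fin n → ℤ, (dyadicCubeHalf n k m).indicator (fun _ => T k m) x

/-- `(2^{kn} ∫_Q f^e)^{1/e}`, with the essential supremum modification for `e = ∞`. -/
def avgNorm (n k : ℕ) (e : ℝ≥0∞) (Q : Set (Rn n)) (f : Rn n → ℝ≥0∞) : ℝ≥0∞ :=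
  if e = ∞ then essSup f (volume.restrict Q)
  else ((2 : ℝ≥0∞) ^ (k * n) * ∫⁻ x in Q, f x ^ e.toReal) ^ (1 / e.toReal)

/-- Conditions (2.14)–(2.16) of the class `X^{α₃}_{α,σ,p}`, expressed for a multiple
sequence `T`. -/
def MemXseq (n : ℕ) (α₁ α₂ α₃ : ℝ) (σ₁ σ₂ p : ℝ≥0∞) (T : ℕ → (Fin n → ℤ) → ℝ≥0∞) : Prop :=
  (∃ C₁ : ℝ≥0∞, 0 < C₁ ∧ C₁ < ∞ ∧ ∀ k j : ℕ, k ≤ j → ∀ m : Fin n → ℤ,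
    avgNorm n k p (dyadicCube n k m) (tbarOf n p T k) *
      avgNorm n k σ₁ (dyadicCube n k m) (fun x => (tbarOf n p T j x)⁻¹) ≤
      C₁ * (2 : ℝ≥0∞) ^ (α₁ * ((k : ℝ) - (j : ℝ)))) ∧
  (∃ C₂ : ℝ≥0∞, 0 < C₂ ∧ C₂ < ∞ ∧ ∀ k j : ℕ, k ≤ j → ∀ m : Fin n → ℤ,
    (avgNorm n k p (dyadicCube n k m) (tbarOf n p T k))⁻¹ *
      avgNorm n k σ₂ (dyadicCube n k m) (tbarOf n p T j) ≤
      C₂ * (2 : ℝ≥0∞) ^ (α₂ * ((j : ℝ) - (k : ℝ)))) ∧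
  (∀ k : ℕ, ∀ m m' : Fin n → ℤ, (∀ i, |m i - m' i| ≤ 1) →
    0 < T k m ∧ T k m ≤ (2 : ℝ≥0∞) ^ (α₃ : ℝ) * T k m')

/-- The weighted class `X^{α₃}_{α,σ,p}` of weight sequences. -/
def MemX (n : ℕ) (α₁ α₂ α₃ : ℝ) (σ₁ σ₂ p : ℝ≥0∞) (t : ℕ → Rn n → ℝ) : Prop :=
  pAdmissible n p t ∧ MemXseq n α₁ α₂ α₃ σ₁ σ₂ p (tkm n p t)

/-- Quasinorm of `B̃^l_{p,q,r}(ℝⁿ, T)` with an `ℝ≥0∞`-valued weight sequence `T`. -/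
def tildeBnormE (n l : ℕ) (p q r : ℝ≥0∞) (T : ℕ → Rn n → ℝ≥0∞) (φ : Rn n → ℝ) : ℝ≥0∞ :=
  lqNorm q (fun k : ℕ =>
    lpNormE p volume (fun x =>
      T (k + 1) x *
        deltaE n l r ((2 : ℝ) ^ (1 - ((k : ℤ) + 1))) (openCube x ((2 : ℝ) ^ (-((k : ℤ) + 1)))) φ)) +
  lpNormE p volume (fun x => T 0 x * eLpNorm φ r (volume.restrict (openCube x 1)))

/-- Quasinorm of `B̃^l_{p,q,r}(ℝⁿ, {t_k})`. -/
def tildeBnorm (n l : ℕ) (p q r : ℝ≥0∞) (t : ℕ → Rn n → ℝ) (φ : Rn n → ℝ) : ℝ≥0∞ :=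
  tildeBnormE n l p q r (fun k x => ENNReal.ofReal (t k x)) φ

/-- Membership in `B̃^l_{p,q,r}(ℝⁿ, {t_k})`. -/
def MemTildeB (n l : ℕ) (p q r : ℝ≥0∞) (t : ℕ → Rn n → ℝ) (φ : Rn n → ℝ) : Prop :=
  MemLrLoc n r φ ∧ tildeBnorm n l p q r t φ < ∞

/-- Quasinorm of `B̄^l_{p,q,r}(ℝⁿ, {t_k})`. -/
def barBnorm (n l : ℕ) (p q r : ℝ≥0∞) (t : ℕ → Rn n → ℝ) (φ : Rn n → ℝ) : ℝ≥0∞ :=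
  lqNorm q (fun k : ℕ =>
    lpNormE p volume (fun x =>
      ENNReal.ofReal (t (k + 1) x) * barDelta n l r ((2 : ℝ) ^ (-((k : ℤ) + 1))) φ x)) +
  lpNormE p volume (fun x => ENNReal.ofReal (t 0 x) * eLpNorm φ r (volume.restrict (openCube x 1)))

/-- Membership in `B̄^l_{p,q,r}(ℝⁿ, {t_k})`. -/
def MemBarB (n l : ℕ) (p q r : ℝ≥0∞) (t : ℕ → Rn n → ℝ) (φ : Rn n → ℝ) : Prop :=
  MemLrLoc n r φ ∧ barBnorm n l p q r t φ < ∞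

/-- The class `A^{loc}_∞`. -/
def MemAlocInfty (n : ℕ) (w : Rn n → ℝ) : Prop :=
  ∃ α : ℝ, α ∈ Set.Ioo (0 : ℝ) 1 ∧ ∃ M : ℝ≥0∞, M < ∞ ∧
    ∀ (c : Rn n) (s : ℝ), 0 < s → s ≤ 1 →
      ∀ F : Set (Rn n), F ⊆ cubeAt c s → MeasurableSet F →
        ENNReal.ofReal α * volume (cubeAt c s) ≤ volume F →
        (∫⁻ x in cubeAt c s, ENNReal.ofReal (w x)) ≤ M * ∫⁻ x in F, ENNReal.ofReal (w x)

/-- The class `A^{loc}_1`. -/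
def MemAloc1 (n : ℕ) (w : Rn n → ℝ) : Prop :=
  ∃ C : ℝ≥0∞, C < ∞ ∧ ∀ (c : Rn n) (s : ℝ), 0 < s → s ≤ 1 →
    ∀ᵐ x ∂volume.restrict (cubeAt c s),
      (∫⁻ y in cubeAt c s, ENNReal.ofReal (w y)) ≤ C * volume (cubeAt c s) * ENNReal.ofReal (w x)

/-- The class `A^{loc}_{p₀}` for `p₀ > 1`. -/
def MemAlocGt (n : ℕ) (p₀ : ℝ) (w : Rn n → ℝ) : Prop :=
  ∃ C : ℝ≥0∞, C < ∞ ∧ ∀ (c : Rn n) (s : ℝ), 0 < s → s ≤ 1 →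
    ((volume (cubeAt c s))⁻¹ * ∫⁻ y in cubeAt c s, ENNReal.ofReal (w y)) *
      ((volume (cubeAt c s))⁻¹ *
        ∫⁻ y in cubeAt c s, ENNReal.ofReal (w y) ^ (-(1 : ℝ) / (p₀ - 1))) ^ (p₀ - 1) ≤ C

/-- The class `A^{loc}_{p₀}` for `p₀ ∈ [1,∞)`. -/
def MemAlocP (n : ℕ) (p₀ : ℝ) (w : Rn n → ℝ) : Prop :=
  if p₀ = 1 then MemAloc1 n w else MemAlocGt n p₀ w

/-- The class `{}^{loc}Y^{α₃}_{α₁,α₂}` of weight sequences of variable smoothness. -/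
def MemLocY (n : ℕ) (α₁ α₂ α₃ : ℝ) (s : ℕ → Rn n → ℝ) : Prop :=
  (∀ k, IsWeight (s k)) ∧
  (∃ C : ℝ, 0 < C ∧ ∀ j k : ℕ, j ≤ k → ∀ x : Rn n,
    C⁻¹ * (2 : ℝ) ^ (α₁ * ((k : ℝ) - (j : ℝ))) ≤ s k x / s j x ∧
      s k x / s j x ≤ C * (2 : ℝ) ^ (α₂ * ((k : ℝ) - (j : ℝ)))) ∧
  (∀ k : ℕ, ∀ x y : Rn n, euclNorm (x - y) ≤ (2 : ℝ) ^ (-(k : ℤ)) →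
    s k x ≤ (2 : ℝ) ^ α₃ * s k y)

/-- The set `Ξ^{d,n}_{k,m} = Q^n_{k,m} × (2^{-k}B^d ∖ 2^{-k-1}B^d) ⊂ ℝ^{n+d}`. -/
def Xi (n d k : ℕ) (m : Fin n → ℤ) : Set (Rn (n + d)) :=
  {z | (fun i => z (Fin.castAdd d i)) ∈ dyadicCube n k m ∧
       euclNorm (fun i : Fin d => z (Fin.natAdd n i)) < (2 : ℝ) ^ (-(k : ℤ)) ∧
       (2 : ℝ) ^ (-(k : ℤ) - 1) ≤ euclNorm (fun i : Fin d => z (Fin.natAdd n i))}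

/-- The multiple sequence `γ̂_{k,m} = ‖γ‖_{L_p(Ξ^{d,n}_{k,m})}` generated by a weight `γ`. -/
def gammaHat (n d : ℕ) (p : ℝ≥0∞) (γ : Rn (n + d) → ℝ) (k : ℕ) (m : Fin n → ℤ) : ℝ≥0∞ :=
  eLpNorm γ p (volume.restrict (Xi n d k m))

def delta1Good (n d : ℕ) (p : ℝ≥0∞) (γ : Rn (n + d) → ℝ) (δ : ℝ) : Prop :=
  ∃ C : ℝ≥0∞, C < ∞ ∧ ∀ k j : ℕ, k ≤ j → ∀ m : Fin n → ℤ,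
    (∑' m' : {m' : Fin n → ℤ // dyadicCube n j m' ⊆ dyadicCube n k m},
        gammaHat n d p γ j m'.1 ^ p.toReal) ≤
      C * (2 : ℝ≥0∞) ^ ((((k : ℝ) - (j : ℝ)) * (d : ℝ)) * δ) * gammaHat n d p γ k m ^ p.toReal

/-- `δ₁(γ,n,d)`. -/
def delta1 (n d : ℕ) (p : ℝ≥0∞) (γ : Rn (n + d) → ℝ) : ℝ :=
  sSup {δ : ℝ | 0 < δ ∧ delta1Good n d p γ δ}

def delta2Good (n d : ℕ) (p : ℝ≥0∞) (γ : Rn (n + d) → ℝ) (δ : ℝ) : Prop :=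
  ∃ C : ℝ≥0∞, C < ∞ ∧ ∀ k j : ℕ, k ≤ j → ∀ m : Fin n → ℤ,
    ∀ G : Set (Fin n → ℤ), (∀ m' ∈ G, dyadicCube n j m' ⊆ dyadicCube n k m) →
      (∑' m' : G, gammaHat n d p γ j m'.1 ^ p.toReal) ≤
        C * (volume (⋃ m' ∈ G, dyadicCube n j m') / volume (dyadicCube n k m)) ^ δ *
          ∑' m' : {m' : Fin n → ℤ // dyadicCube n j m' ⊆ dyadicCube n k m},
            gammaHat n d p γ j m'.1 ^ p.toReal

/-- `δ₂(γ,n,d)`. -/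
def delta2 (n d : ℕ) (p : ℝ≥0∞) (γ : Rn (n + d) → ℝ) : ℝ :=
  sSup {δ : ℝ | 0 < δ ∧ delta2Good n d p γ δ}

/-- The cardinal B-spline of degree `deg` with knots `0, 1, …, deg + 1`. -/
def cardB : ℕ → ℝ → ℝ
  | 0, x => if 0 ≤ x ∧ x < 1 then 1 else 0
  | (d + 1), x => (x / (d + 1)) * cardB d x + (((d : ℝ) + 2 - x) / (d + 1)) * cardB d (x - 1)

/-- The tensor-product B-spline `N^{deg}_{k,m}` on `ℝⁿ`. -/
def Bspl (n deg k : ℕ) (m : Fin n → ℤ) (x : Rn n) : ℝ :=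
  ∏ i, cardB deg (2 ^ k * x i - (m i : ℝ))

/-- The spline `Σ_m β_m N^{deg}_{k,m}`. -/
def splineSum (n deg k : ℕ) (β : (Fin n → ℤ) → ℝ) (x : Rn n) : ℝ :=
  ∑' m, β m * Bspl n deg k m x

/-- A dyadic spline of degree `deg` (an element of `Σ^{deg} = ⋃_k Σ^{deg}_k`). -/
def IsSplineFn (n deg : ℕ) (S : Rn n → ℝ) : Prop :=
  ∃ (k : ℕ) (β : (Fin n → ℤ) → ℝ), S = splineSum n deg k β

/-- The weighted best spline approximation `s_k(φ)` by splines of degree `deg`. -/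
def sApprox (n deg : ℕ) (p r : ℝ≥0∞) (T : ℕ → (Fin n → ℤ) → ℝ≥0∞) (φ : Rn n → ℝ) (k : ℕ) :
    ℝ≥0∞ :=
  ⨅ β : (Fin n → ℤ) → ℝ,
    lqNorm p (fun m => T k m *
      eLpNorm (fun x => φ x - splineSum n deg k β x) r (volume.restrict (dyadicCube n k m)))

/-- `s_j(φ)` for `j ∈ {-1, 0, 1, 2, …}`, including the term `s_{-1}`. -/
def sApproxZ (n deg : ℕ) (p r : ℝ≥0∞) (T : ℕ → (Fin n → ℤ) → ℝ≥0∞) (φ : Rn n → ℝ) (j : ℤ) :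
    ℝ≥0∞ :=
  if j < 0 then
    lqNorm p (fun m => T 0 m * eLpNorm φ r (volume.restrict (dyadicCube n 0 m)))
  else sApprox n deg p r T φ j.toNat

/-- Local best polynomial approximation `E_l(φ,Q)_r` by polynomials of total degree `< l`. -/
def bestApproxE (n l : ℕ) (r : ℝ≥0∞) (φ : Rn n → ℝ) (Q : Set (Rn n)) : ℝ≥0∞ :=
  ⨅ P : {P : MvPolynomial (Fin n) ℝ // P.totalDegree < l},
    eLpNorm (fun x => φ x - MvPolynomial.eval x P.1) r (volume.restrict Q)

/-- The modulus of continuity `ω_l(φ,Q)_r`. -/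
def modulusE (n l : ℕ) (r : ℝ≥0∞) (φ : Rn n → ℝ) (Q : Set (Rn n)) : ℝ≥0∞ :=
  ⨆ h : Rn n, eLpNorm (difflOn l Q h φ) r (volume : Measure (Rn n))

def partialDeriv {N : ℕ} (i : Fin N) (ψ : Rn N → ℝ) : Rn N → ℝ :=
  fun x => fderiv ℝ ψ x (Pi.single i 1)

def iterPD {N : ℕ} : List (Fin N) → (Rn N → ℝ) → Rn N → ℝ
  | [], ψ => ψ
  | i :: L, ψ => partialDeriv i (iterPD L ψ)

def multiIdxList {N : ℕ} (α : Fin N → ℕ) : List (Fin N) :=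
  (List.finRange N).foldr (fun i L => List.replicate (α i) i ++ L) []

/-- Iterated partial derivative `D^α`. -/
def multiDeriv {N : ℕ} (α : Fin N → ℕ) (ψ : Rn N → ℝ) : Rn N → ℝ :=
  iterPD (multiIdxList α) ψ

/-- `g` is the weak (Sobolev) derivative `D^α f`. -/
def IsWeakDeriv {N : ℕ} (α : Fin N → ℕ) (f g : Rn N → ℝ) : Prop :=
  ∀ ψ : Rn N → ℝ, ContDiff ℝ (⊤ : ℕ∞) ψ → HasCompactSupport ψ →
    ∫ x, f x * multiDeriv α ψ x = (-1 : ℝ) ^ (∑ i, α i) * ∫ x, g x * ψ x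

/-- The weighted Sobolev norm `Σ_{|α| ≤ l} ‖γ · D^α f‖_{L_p}` computed from a system `D` of
weak derivatives. -/
def sobNorm (N : ℕ) (p : ℝ≥0∞) (l : ℕ) (γ : Rn N → ℝ) (D : (Fin N → ℕ) → Rn N → ℝ) : ℝ≥0∞ :=
  ∑' α : Fin N → ℕ,
    if (∑ i, α i) ≤ l then eLpNorm (fun x => γ x * D α x) p volume else 0

/-- Membership in the weighted Sobolev space `W^l_p(ℝ^N, γ)`, witnessed by the system `D`
of weak derivatives of `f`. -/
def MemW (N : ℕ) (p : ℝ≥0∞) (l : ℕ) (γ : Rn N → ℝ) (f : Rn N → ℝ)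
    (D : (Fin N → ℕ) → Rn N → ℝ) : Prop :=
  MeasureTheory.LocallyIntegrable f volume ∧ D 0 = f ∧
    (∀ α : Fin N → ℕ, (∑ i, α i) ≤ l →
      MeasureTheory.LocallyIntegrable (D α) volume ∧ IsWeakDeriv α f (D α)) ∧
    sobNorm N p l γ D < ∞

/-- `φ` is the trace of `f` on the plane `y = 0`. -/
def IsTraceSob {n d : ℕ} (f : Rn (n + d) → ℝ) (φ : Rn n → ℝ) : Prop :=
  ∃ f' : Rn (n + d) → ℝ, f' =ᵐ[volume] f ∧
    ∀ (c : Rn n) (s : ℝ), 0 < s →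
      Filter.Tendsto (fun y : Rn d => ∫ x in cubeAt c s, |f' (Fin.append x y) - φ x|)
        (nhds 0) (nhds 0)

/-- The weight sequence `γ_k(x) = 2^{k(l+n/p)} Σ_m χ_{Q̃^n_{k,m}}(x) γ̂_{k,m}`. -/
def gammaSeq (n d : ℕ) (p : ℝ≥0∞) (l : ℕ) (γ : Rn (n + d) → ℝ) (k : ℕ) (x : Rn n) : ℝ≥0∞ :=
  (2 : ℝ≥0∞) ^ ((k : ℝ) * ((l : ℝ) + (n : ℝ) / p.toReal)) *
    ∑' m : Fin n → ℤ, (dyadicCubeHalf n k m).indicator (fun _ => gammaHat n d p γ k m) x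

/-- Conjugate exponent in `ℝ≥0∞`. -/
def conjE (e : ℝ≥0∞) : ℝ≥0∞ := (1 - e⁻¹)⁻¹

/-- The exponent `p_θ`. -/
def pTheta (p θ : ℝ≥0∞) : ℝ≥0∞ := if θ = ∞ ∧ p = ∞ then 1 else p / θ

/-!
Let `φ_j` be `φ` smoothed twice at scale `2⁻ʲ` by a kernel of order `l`, and let `u_0 = φ_0`,
`u_j = φ_j - φ_{j-1}`. The extension is `f(x, y) = ∑_j u_j(x) χ(2ʲ y)` with a cutoff `χ` that is
`1` near the origin. Derivatives of order at most `l` of the `j`-th term live on the slab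
`|y| < 2^(-j-2)` and are bounded there by `b_j`, which is constant on dyadic cubes of side
`2^(-j-1)` and equals `2^(jl)` times a mean of the local `l`-th differences of `φ` at scale `2⁻ʲ`.

It remains to bound `∑_j 1_{slab j} b_j` in the weighted `L_p`. The Muckenhoupt condition makes the
mass of the slabs over a fixed cube decay geometrically, so a discrete Hardy inequality reduces the
norm to the `ℓ_p` sum of the `b_j` against the mass of the shells `Ξ_{j,m}`, which is the
`B̃`-norm. The same bound makes the majorant locally integrable, hence the series has termwise weak
derivatives. Finally, on the shell `|y| ~ 2⁻ʲ` the series telescopes to a convex combination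
of two consecutive `φ_j`, which converge to `φ` in `L_1^loc`: this is the trace.
-/

open scoped Convolution

/-! ### Iterated partial derivatives -/

section IteratedPartialDerivatives

variable {N : ℕ} {g : Rn N → ℝ}

lemma contDiff_partialDeriv (i : Fin N) (hg : ContDiff ℝ (⊤ : ℕ∞) g) :
    ContDiff ℝ (⊤ : ℕ∞) (partialDeriv i g) :=
  (contDiff_infty_iff_fderiv.1 hg).2.clm_apply contDiff_const

lemma contDiff_iterPD (L : List (Fin N)) (hg : ContDiff ℝ (⊤ : ℕ∞) g) :
    ContDiff ℝ (⊤ : ℕ∞) (iterPD L g) := by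
  induction L with
  | nil => exact hg
  | cons i L ih => exact contDiff_partialDeriv i ih

lemma differentiable_iterPD (L : List (Fin N)) (hg : ContDiff ℝ (⊤ : ℕ∞) g) :
    Differentiable ℝ (iterPD L g) :=
  (contDiff_iterPD L hg).differentiable (by simp)

lemma tsupport_iterPD_subset (L : List (Fin N)) (g : Rn N → ℝ) :
    tsupport (iterPD L g) ⊆ tsupport g := by
  induction L with
  | nil => exact subset_rfl
  | cons i L ih => exact (tsupport_fderiv_apply_subset ℝ _).trans ih

lemma hasCompactSupport_iterPD (L : List (Fin N)) (hg : HasCompactSupport g) :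
    HasCompactSupport (iterPD L g) :=
  hg.mono' ((subset_tsupport _).trans (tsupport_iterPD_subset L g))

lemma iterPD_append (L₁ L₂ : List (Fin N)) (g : Rn N → ℝ) :
    iterPD (L₁ ++ L₂) g = iterPD L₁ (iterPD L₂ g) := by
  induction L₁ with
  | nil => rfl
  | cons i L ih => simp only [List.cons_append, iterPD, ih]

lemma iterPD_const_mul (L : List (Fin N)) (hg : ContDiff ℝ (⊤ : ℕ∞) g) (a : ℝ) :
    iterPD L (fun x => a * g x) = fun x => a * iterPD L g x := by
  induction L with
  | nil => rfl
  | cons i L ih =>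
    funext x
    simp only [iterPD, ih, partialDeriv]
    rw [fderiv_const_mul (differentiable_iterPD L hg x)]
    rfl

lemma iterPD_comp_smul (L : List (Fin N)) (hg : ContDiff ℝ (⊤ : ℕ∞) g) (c : ℝ) :
    iterPD L (fun x => g (c • x)) = fun x => c ^ L.length * iterPD L g (c • x) := by
  induction L with
  | nil => simp [iterPD]
  | cons i L ih =>
    funext x
    have hL : Differentiable ℝ fun x => iterPD L g (c • x) :=
      (differentiable_iterPD L hg).comp (differentiable_id.const_smul c)
    simp only [iterPD, ih, partialDeriv]
    rw [fderiv_const_mul (hL x), fderiv_comp_smul]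
    simp only [_root_.smul_apply, smul_eq_mul, List.length_cons, pow_succ, mul_assoc]

lemma iterPD_add (L : List (Fin N)) {f : Rn N → ℝ} (hf : ContDiff ℝ (⊤ : ℕ∞) f)
    (hg : ContDiff ℝ (⊤ : ℕ∞) g) : iterPD L (f + g) = iterPD L f + iterPD L g := by
  induction L with
  | nil => rfl
  | cons i L ih =>
    funext x
    simp only [iterPD, ih, partialDeriv, Pi.add_apply]
    rw [fderiv_add (differentiable_iterPD L hf x) (differentiable_iterPD L hg x)]
    rfl

lemma integral_mul_partialDeriv (i : Fin N) {f ψ : Rn N → ℝ} (hf : ContDiff ℝ (⊤ : ℕ∞) f)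
    (hψ : ContDiff ℝ (⊤ : ℕ∞) ψ) (hc : HasCompactSupport ψ) :
    ∫ x, f x * partialDeriv i ψ x = -∫ x, partialDeriv i f x * ψ x :=
  integral_mul_fderiv_eq_neg_fderiv_mul_of_integrable
    (((contDiff_partialDeriv i hf).continuous.mul hψ.continuous).integrable_of_hasCompactSupport
      hc.mul_left)
    ((hf.continuous.mul (contDiff_partialDeriv i hψ).continuous).integrable_of_hasCompactSupport
      (hasCompactSupport_iterPD [i] hc).mul_left)
    ((hf.continuous.mul hψ.continuous).integrable_of_hasCompactSupport hc.mul_left)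
    (fun _ _ => hf.differentiable (by simp) _) (fun _ _ => hψ.differentiable (by simp) _)

lemma integral_mul_iterPD (L : List (Fin N)) {f ψ : Rn N → ℝ} (hf : ContDiff ℝ (⊤ : ℕ∞) f)
    (hψ : ContDiff ℝ (⊤ : ℕ∞) ψ) (hc : HasCompactSupport ψ) :
    ∫ x, f x * iterPD L ψ x = (-1 : ℝ) ^ L.length * ∫ x, iterPD L.reverse f x * ψ x := by
  induction L generalizing f with
  | nil => simp [iterPD]
  | cons i L ih =>
    rw [show iterPD (i :: L) ψ = partialDeriv i (iterPD L ψ) from rfl,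
      integral_mul_partialDeriv i hf (contDiff_iterPD L hψ) (hasCompactSupport_iterPD L hc),
      ih (contDiff_partialDeriv i hf), List.reverse_cons, iterPD_append, List.length_cons, pow_succ]
    simp [iterPD]

lemma iterPD_convolution (L : List (Fin N)) {κ ρ : Rn N → ℝ} (hκ : ContDiff ℝ (⊤ : ℕ∞) κ)
    (hc : HasCompactSupport κ) (hρ : LocallyIntegrable ρ) :
    iterPD L (κ ⋆ ρ) = iterPD L κ ⋆ ρ := by
  induction L with
  | nil => rfl
  | cons i L ih =>
    have hκL := contDiff_iterPD L hκ
    have hcL := hasCompactSupport_iterPD L hc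
    funext x
    have hderiv := hcL.hasFDerivAt_convolution_left (ContinuousLinearMap.lsmul ℝ ℝ)
      (hκL.of_le (by exact_mod_cast le_top)) hρ x
    simp only [iterPD, ih, partialDeriv]
    rw [hderiv.fderiv, convolution, convolution, ContinuousLinearMap.integral_apply]
    · simp [partialDeriv]
    · exact (hcL.fderiv ℝ).convolutionExists_left
        ((ContinuousLinearMap.lsmul ℝ ℝ : ℝ →L[ℝ] ℝ →L[ℝ] ℝ).precompL (Rn N))
        (hκL.continuous_fderiv (by simp)) hρ x

end IteratedPartialDerivatives

/-! ### The splitting of coordinates -/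

section CoordinateSplitting

variable {n d : ℕ}

/-- The projection `(x, y) ↦ x` of `ℝ^{n+d}` onto `ℝⁿ`. -/
def projX : Rn (n + d) →L[ℝ] Rn n :=
  ContinuousLinearMap.pi fun i => ContinuousLinearMap.proj (Fin.castAdd d i)

/-- The projection `(x, y) ↦ y` of `ℝ^{n+d}` onto `ℝ^d`. -/
def projY : Rn (n + d) →L[ℝ] Rn d :=
  ContinuousLinearMap.pi fun i => ContinuousLinearMap.proj (Fin.natAdd n i)

@[simp] lemma projX_append (x : Rn n) (y : Rn d) : projX (Fin.append x y) = x := by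
  ext i; simp [projX]

@[simp] lemma projY_append (x : Rn n) (y : Rn d) : projY (Fin.append x y) = y := by
  ext i; simp [projY]

lemma projX_single_castAdd (i : Fin n) :
    projX (Pi.single (Fin.castAdd d i) (1 : ℝ)) = Pi.single i 1 := by
  ext j; simp [projX, Pi.single_apply]

lemma projY_single_natAdd (i : Fin d) :
    projY (Pi.single (Fin.natAdd n i) (1 : ℝ)) = Pi.single i 1 := by
  ext j; simp [projY, Pi.single_apply]

lemma projY_single_castAdd (i : Fin n) :
    projY (Pi.single (Fin.castAdd d i) (1 : ℝ)) = (0 : Rn d) := by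
  ext j
  exact Pi.single_eq_of_ne (M := fun _ : Fin (n + d) => ℝ)
    (by simp only [ne_eq, Fin.ext_iff, Fin.val_natAdd, Fin.val_castAdd]; omega) 1

lemma projX_single_natAdd (i : Fin d) :
    projX (Pi.single (Fin.natAdd n i) (1 : ℝ)) = (0 : Rn n) := by
  ext j
  exact Pi.single_eq_of_ne (M := fun _ : Fin (n + d) => ℝ)
    (by simp only [ne_eq, Fin.ext_iff, Fin.val_natAdd, Fin.val_castAdd]; omega) 1

/-- The function `(x, y) ↦ A(x) B(y)` on `ℝ^{n+d}`. -/
def tensor (A : Rn n → ℝ) (B : Rn d → ℝ) (z : Rn (n + d)) : ℝ := A (projX z) * B (projY z)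

lemma contDiff_tensor {A : Rn n → ℝ} {B : Rn d → ℝ} (hA : ContDiff ℝ (⊤ : ℕ∞) A)
    (hB : ContDiff ℝ (⊤ : ℕ∞) B) : ContDiff ℝ (⊤ : ℕ∞) (tensor A B) :=
  (hA.comp projX.contDiff).mul (hB.comp projY.contDiff)

lemma partialDeriv_tensor (i : Fin (n + d)) {A : Rn n → ℝ} {B : Rn d → ℝ}
    (hA : ContDiff ℝ (⊤ : ℕ∞) A) (hB : ContDiff ℝ (⊤ : ℕ∞) B) (z : Rn (n + d)) :
    partialDeriv i (tensor A B) z =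
      A (projX z) * fderiv ℝ B (projY z) (projY (Pi.single i 1)) +
        B (projY z) * fderiv ℝ A (projX z) (projX (Pi.single i 1)) := by
  have hA' : HasFDerivAt (fun z => A (projX z)) ((fderiv ℝ A (projX z)).comp projX) z :=
    (hA.differentiable (by simp) _).hasFDerivAt.comp z projX.hasFDerivAt
  have hB' : HasFDerivAt (fun z => B (projY z)) ((fderiv ℝ B (projY z)).comp projY) z :=
    (hB.differentiable (by simp) _).hasFDerivAt.comp z projY.hasFDerivAt
  have hAB : HasFDerivAt (tensor A B) _ z := hA'.mul hB'
  rw [partialDeriv, hAB.fderiv]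
  simp

lemma exists_iterPD_tensor (L : List (Fin (n + d))) :
    ∃ (L₁ : List (Fin n)) (L₂ : List (Fin d)), L₁.length + L₂.length = L.length ∧
      ∀ (A : Rn n → ℝ) (B : Rn d → ℝ), ContDiff ℝ (⊤ : ℕ∞) A → ContDiff ℝ (⊤ : ℕ∞) B →
        iterPD L (tensor A B) = tensor (iterPD L₁ A) (iterPD L₂ B) := by
  induction L with
  | nil => exact ⟨[], [], rfl, fun A B _ _ => rfl⟩
  | cons i L ih =>
    obtain ⟨L₁, L₂, hlen, hL⟩ := ih
    refine Fin.addCases (fun j => ?_) (fun j => ?_) i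
    · refine ⟨j :: L₁, L₂, by simp only [List.length_cons]; omega, fun A B hA hB => ?_⟩
      funext z
      simp only [iterPD, hL A B hA hB]
      rw [partialDeriv_tensor _ (contDiff_iterPD L₁ hA) (contDiff_iterPD L₂ hB),
        projY_single_castAdd, projX_single_castAdd, map_zero, mul_zero, zero_add, mul_comm]
      rfl
    · refine ⟨L₁, j :: L₂, by simp only [List.length_cons]; omega, fun A B hA hB => ?_⟩
      funext z
      simp only [iterPD, hL A B hA hB]
      rw [partialDeriv_tensor _ (contDiff_iterPD L₁ hA) (contDiff_iterPD L₂ hB),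
        projY_single_natAdd, projX_single_natAdd, map_zero, mul_zero, add_zero]
      rfl

end CoordinateSplitting

/-! ### Muckenhoupt weights -/

section Weights

open scoped Pointwise

lemma rpow_lintegral_le_of_weight {α : Type*} [MeasurableSpace α] {μ : Measure α} {q : ℝ}
    (hq : 1 < q) {w F : α → ℝ≥0∞} (hw : AEMeasurable w μ) (hw0 : ∀ z, w z ≠ 0)
    (hwt : ∀ z, w z ≠ ∞) (hF : AEMeasurable F μ) :
    (∫⁻ z, F z ∂μ) ^ q ≤
      (∫⁻ z, F z ^ q * w z ∂μ) * (∫⁻ z, w z ^ (-(1 : ℝ) / (q - 1)) ∂μ) ^ (q - 1) := by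
  have hq0 : 0 < q := zero_lt_one.trans hq
  have hq1 : q - 1 ≠ 0 := by linarith
  have hfactor : ∀ z, F z = F z * w z ^ (1 / q) * w z ^ (-(1 / q)) := fun z => by
    rw [mul_assoc, ← ENNReal.rpow_add _ _ (hw0 z) (hwt z), add_neg_cancel, ENNReal.rpow_zero,
      mul_one]
  have hpow : ∀ z, (F z * w z ^ (1 / q)) ^ q = F z ^ q * w z := fun z => by
    rw [ENNReal.mul_rpow_of_nonneg _ _ hq0.le, ← ENNReal.rpow_mul, one_div_mul_cancel hq0.ne',
      ENNReal.rpow_one]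
  have hpow' : ∀ z, (w z ^ (-(1 / q))) ^ q.conjExponent = w z ^ (-(1 : ℝ) / (q - 1)) := fun z => by
    rw [← ENNReal.rpow_mul, Real.conjExponent]; congr 1; field_simp
  have hHolder := ENNReal.lintegral_mul_le_Lp_mul_Lq μ (Real.HolderConjugate.conjExponent hq)
    (hF.mul (hw.pow_const (1 / q))) (hw.pow_const (-(1 / q)))
  simp only [Pi.mul_apply, ← hfactor, hpow, hpow'] at hHolder
  calc (∫⁻ z, F z ∂μ) ^ q ≤ _ := ENNReal.rpow_le_rpow hHolder hq0.le
    _ = _ := by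
      rw [ENNReal.mul_rpow_of_nonneg _ _ hq0.le, ← ENNReal.rpow_mul, ← ENNReal.rpow_mul,
        one_div_mul_cancel hq0.ne', ENNReal.rpow_one]
      congr 2
      rw [Real.conjExponent]
      field_simp

lemma cubeAt_eq_pi {N : ℕ} (c : Rn N) (s : ℝ) :
    cubeAt c s = Set.univ.pi fun i => Set.Ioo (c i) (c i + s) := by
  ext x; simp [cubeAt]

lemma isOpen_cubeAt {N : ℕ} (c : Rn N) (s : ℝ) : IsOpen (cubeAt c s) := by
  rw [cubeAt_eq_pi]
  exact isOpen_set_pi Set.finite_univ fun _ _ => isOpen_Ioo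

lemma volume_cubeAt {N : ℕ} (c : Rn N) (s : ℝ) :
    volume (cubeAt c s) = ENNReal.ofReal s ^ N := by
  simp [cubeAt_eq_pi, Real.volume_pi_Ioo]

lemma volume_cubeAt_ne_zero {N : ℕ} (c : Rn N) {s : ℝ} (hs : 0 < s) :
    volume (cubeAt c s) ≠ 0 := by
  rw [volume_cubeAt]; exact pow_ne_zero _ (ENNReal.ofReal_pos.2 hs).ne'

lemma volume_cubeAt_ne_top {N : ℕ} (c : Rn N) (s : ℝ) : volume (cubeAt c s) ≠ ∞ := by
  rw [volume_cubeAt]; exact ENNReal.pow_ne_top ENNReal.ofReal_ne_top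

lemma vadd_smul_subset_cubeAt {N : ℕ} {E : Set (Rn N)} (hE : E ⊆ cubeAt 0 1) (c : Rn N) {s : ℝ}
    (hs : 0 < s) : c +ᵥ s • E ⊆ cubeAt c s := by
  rintro _ ⟨_, ⟨u, hu, rfl⟩, rfl⟩ i
  obtain ⟨h0, h1⟩ := hE hu i
  simp only [Pi.zero_apply, zero_add] at h0 h1
  have := mul_pos hs h0
  have := mul_lt_mul_of_pos_left h1 hs
  simp only [vadd_eq_add, Pi.add_apply, Pi.smul_apply, smul_eq_mul]
  constructor <;> linarith

/-- The measure `w dx` with density a weight `w`. -/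
def weightMeasure {N : ℕ} (w : Rn N → ℝ) : Measure (Rn N) :=
  volume.withDensity (fun z => ENNReal.ofReal (w z))

lemma weightMeasure_absolutelyContinuous {N : ℕ} (w : Rn N → ℝ) :
    weightMeasure w ≪ (volume : Measure (Rn N)) :=
  withDensity_absolutelyContinuous _ _

section

variable {N : ℕ} {q : ℝ} {w : Rn N → ℝ}

lemma rpow_setLIntegral_le_of_isWeight (hq : 1 < q) (hw : IsWeight w) {F : Rn N → ℝ≥0∞}
    (hF : Measurable F) {P : Set (Rn N)} (hP : MeasurableSet P) :
    (∫⁻ z in P, F z) ^ q ≤ (∫⁻ z in P, F z ^ q ∂weightMeasure w) *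
      (∫⁻ z in P, ENNReal.ofReal (w z) ^ (-(1 : ℝ) / (q - 1))) ^ (q - 1) := by
  have hW : Measurable fun z => ENNReal.ofReal (w z) := hw.1.ennreal_ofReal
  rw [weightMeasure, setLIntegral_withDensity_eq_setLIntegral_mul _ hW (hF.pow_const q) hP]
  simp only [Pi.mul_apply, mul_comm (ENNReal.ofReal _)]
  exact rpow_lintegral_le_of_weight hq hW.aemeasurable
    (fun z => (ENNReal.ofReal_pos.2 (hw.2 z)).ne') (fun _ => ENNReal.ofReal_ne_top) hF.aemeasurable

lemma volume_rpow_le_weightMeasure_mul (hq : 1 < q) (hw : IsWeight w) {E P : Set (Rn N)}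
    (hE : MeasurableSet E) (hP : MeasurableSet P) (hEP : E ⊆ P) :
    volume E ^ q ≤ weightMeasure w E *
      (∫⁻ z in P, ENNReal.ofReal (w z) ^ (-(1 : ℝ) / (q - 1))) ^ (q - 1) := by
  have h := rpow_setLIntegral_le_of_isWeight hq hw (measurable_one.indicator hE) hP
  have hpow : ∀ z, E.indicator (1 : Rn N → ℝ≥0∞) z ^ q = E.indicator 1 z := fun z => by
    by_cases hz : z ∈ E <;> simp [hz, zero_lt_one.trans hq]
  simpa only [hpow, lintegral_indicator_one hE, Measure.restrict_apply hE,
    Set.inter_eq_left.2 hEP] using h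

lemma MemAlocGt.setLIntegral_lt_top (hA : MemAlocGt N q w) (hq : 1 < q) (hw : IsWeight w)
    (c : Rn N) {s : ℝ} (hs : 0 < s) (hs1 : s ≤ 1) :
    (∫⁻ y in cubeAt c s, ENNReal.ofReal (w y)) < ∞ ∧
    (∫⁻ y in cubeAt c s, ENNReal.ofReal (w y) ^ (-(1 : ℝ) / (q - 1))) < ∞ := by
  obtain ⟨C, hC, h⟩ := hA
  have h := (h c s hs hs1).trans_lt hC
  have hW : Measurable fun z => ENNReal.ofReal (w z) := hw.1.ennreal_ofReal
  have hW0 : ∀ z, ENNReal.ofReal (w z) ≠ 0 := fun z => (ENNReal.ofReal_pos.2 (hw.2 z)).ne'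
  have hP := volume_cubeAt_ne_zero c hs
  have hPt := volume_cubeAt_ne_top c s
  have hpos : ∀ f : Rn N → ℝ≥0∞, Measurable f → (∀ z, f z ≠ 0) → ∫⁻ y in cubeAt c s, f y ≠ 0 :=
    fun f hf hf0 => by
      rw [← pos_iff_ne_zero, setLIntegral_pos_iff hf,
        Set.eq_univ_of_forall (s := f.support) hf0, Set.univ_inter]
      exact pos_iff_ne_zero.2 hP
  have hI := hpos _ hW hW0
  have hJ := hpos _ (hW.pow_const (-(1 : ℝ) / (q - 1))) fun z => by
    simp [ENNReal.rpow_eq_zero_iff, hW0 z]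
  have hq' : 0 < q - 1 := by linarith
  constructor <;> refine lt_top_iff_ne_top.2 fun htop => h.ne ?_
  · rw [htop, ENNReal.mul_top (ENNReal.inv_ne_zero.2 hPt), ENNReal.top_mul]
    simp [ENNReal.rpow_eq_zero_iff, hq', hPt, hJ, hq'.not_gt]
  · rw [htop, ENNReal.mul_top (ENNReal.inv_ne_zero.2 hPt), ENNReal.top_rpow_of_pos hq',
      ENNReal.mul_top]
    simp [hPt, hI]

lemma MemAlocGt.exists_weightMeasure_mul_le (hA : MemAlocGt N q w) (hq : 1 < q)
    (hw : IsWeight w) :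
    ∃ C < ∞, ∀ (c : Rn N) (s : ℝ), 0 < s → s ≤ 1 → ∀ E ⊆ cubeAt c s, MeasurableSet E →
      weightMeasure w (cubeAt c s) * volume E ^ q ≤
        C * volume (cubeAt c s) ^ q * weightMeasure w E := by
  obtain ⟨C, hC, h⟩ := hA
  refine ⟨C, hC, fun c s hs hs1 E hEP hE => ?_⟩
  have h := h c s hs hs1
  rw [← withDensity_apply _ (isOpen_cubeAt c s).measurableSet, ← weightMeasure] at h
  set P := cubeAt c s
  set J := ∫⁻ y in P, ENNReal.ofReal (w y) ^ (-(1 : ℝ) / (q - 1))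
  have hP := volume_cubeAt_ne_zero c hs
  have hPt := volume_cubeAt_ne_top c s
  have hq' : 0 ≤ q - 1 := by linarith
  have hVq : volume P * volume P ^ (q - 1) = volume P ^ q := by
    conv_lhs => rw [← ENNReal.rpow_one (volume P), ← ENNReal.rpow_mul, one_mul,
      ← ENNReal.rpow_add _ _ hP hPt, add_sub_cancel]
  have hscale : weightMeasure w P * J ^ (q - 1) =
      ((volume P)⁻¹ * weightMeasure w P) * ((volume P)⁻¹ * J) ^ (q - 1) * volume P ^ q := by
    have hPq : ((volume P)⁻¹) ^ (q - 1) * volume P ^ (q - 1) = 1 := by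
      rw [← ENNReal.mul_rpow_of_nonneg _ _ hq', ENNReal.inv_mul_cancel hP hPt, ENNReal.one_rpow]
    rw [ENNReal.mul_rpow_of_nonneg _ _ hq', ← hVq]
    calc weightMeasure w P * J ^ (q - 1) = (volume P)⁻¹ * volume P *
          (((volume P)⁻¹) ^ (q - 1) * volume P ^ (q - 1)) * (weightMeasure w P * J ^ (q - 1)) := by
          rw [hPq, ENNReal.inv_mul_cancel hP hPt, one_mul, one_mul]
      _ = _ := by ring
  calc weightMeasure w P * volume E ^ q
      ≤ weightMeasure w P * (weightMeasure w E * J ^ (q - 1)) := by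
        gcongr
        exact volume_rpow_le_weightMeasure_mul hq hw hE (isOpen_cubeAt c s).measurableSet hEP
    _ = weightMeasure w P * J ^ (q - 1) * weightMeasure w E := by ring
    _ ≤ C * volume P ^ q * weightMeasure w E := by rw [hscale]; gcongr

lemma MemAlocGt.exists_weightMeasure_Icc_le (hA : MemAlocGt N q w) (hq : 1 < q)
    (hw : IsWeight w) {E : Set (Rn N)} (hE : MeasurableSet E)
    (hEs : E ⊆ cubeAt (0 : Rn N) 1) (hE0 : volume E ≠ 0) :
    ∃ M < ∞, ∀ (c : Rn N) (s : ℝ), 0 < s → s ≤ 1 →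
      weightMeasure w (Set.Icc c fun i => c i + s) ≤ M * weightMeasure w (c +ᵥ s • E) := by
  obtain ⟨C, hC, h⟩ := hA.exists_weightMeasure_mul_le hq hw
  have hq0 : 0 ≤ q := by linarith
  have hEt : volume E ≠ ∞ := measure_ne_top_of_subset hEs (volume_cubeAt_ne_top 0 1)
  have hEq0 : volume E ^ q ≠ 0 := by simp [ENNReal.rpow_eq_zero_iff, hE0, hEt]
  have hEqt : volume E ^ q ≠ ∞ := ENNReal.rpow_ne_top_of_nonneg hq0 hEt
  refine ⟨C / volume E ^ q, ENNReal.div_lt_top hC.ne hEq0, fun c s hs hs1 => ?_⟩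
  have hPq0 : volume (cubeAt c s) ^ q ≠ 0 := by
    simp [ENNReal.rpow_eq_zero_iff, volume_cubeAt_ne_zero c hs, volume_cubeAt_ne_top c s]
  have hPqt : volume (cubeAt c s) ^ q ≠ ∞ :=
    ENNReal.rpow_ne_top_of_nonneg hq0 (volume_cubeAt_ne_top c s)
  have hvol : volume (c +ᵥ s • E) = volume (cubeAt c s) * volume E := by
    rw [measure_vadd, Measure.addHaar_smul, volume_cubeAt, abs_of_pos (by positivity),
      Module.finrank_fin_fun, ENNReal.ofReal_pow hs.le]
  have hIcc : weightMeasure w (Set.Icc c fun i => c i + s) = weightMeasure w (cubeAt c s) := by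
    rw [cubeAt_eq_pi]
    exact (measure_congr ((weightMeasure_absolutelyContinuous w).ae_eq
      Measure.univ_pi_Ioo_ae_eq_Icc)).symm
  have hle := h c s hs hs1 _ (vadd_smul_subset_cubeAt hEs c hs)
    ((hE.const_smul₀ s).const_vadd c)
  rw [hvol, ENNReal.mul_rpow_of_nonneg _ _ hq0, mul_left_comm, mul_comm C, mul_assoc,
    ENNReal.mul_le_mul_iff_right hPq0 hPqt] at hle
  rw [hIcc, ENNReal.div_eq_inv_mul, mul_assoc, ← ENNReal.div_eq_inv_mul,
    ENNReal.le_div_iff_mul_le (Or.inl hEq0) (Or.inl hEqt)]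
  exact hle

lemma MemAlocGt.exists_mem_nhds_setLIntegral_lt_top (hA : MemAlocGt N q w) (hq : 1 < q)
    (hw : IsWeight w) {p : ℝ} (hqp : q ≤ p) {G : Rn N → ℝ≥0∞} (hG : Measurable G)
    (hGp : ∫⁻ z, G z ^ p ∂weightMeasure w < ∞) (x : Rn N) :
    ∃ U ∈ nhds x, ∫⁻ z in U, G z < ∞ := by
  set P := cubeAt (fun i => x i - 1 / 2) 1
  have hP : IsOpen P := isOpen_cubeAt _ _
  refine ⟨P, hP.mem_nhds fun i => by constructor <;> linarith, ?_⟩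
  obtain ⟨hI, hJ⟩ := hA.setLIntegral_lt_top hq hw (fun i => x i - 1 / 2) one_pos le_rfl
  rw [← withDensity_apply _ hP.measurableSet, ← weightMeasure] at hI
  have hpow : ∀ z, G z ^ q ≤ 1 + G z ^ p := fun z => by
    rcases le_total (G z) 1 with hz | hz
    · exact (ENNReal.rpow_le_one hz (by linarith)).trans le_self_add
    · exact (ENNReal.rpow_le_rpow_of_exponent_le hz hqp).trans le_add_self
  have hGq : ∫⁻ z in P, G z ^ q ∂weightMeasure w < ∞ := by
    calc ∫⁻ z in P, G z ^ q ∂weightMeasure w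
        ≤ ∫⁻ z in P, 1 + G z ^ p ∂weightMeasure w := lintegral_mono hpow
      _ = weightMeasure w P + ∫⁻ z in P, G z ^ p ∂weightMeasure w := by
        rw [lintegral_add_left measurable_const, setLIntegral_one]
      _ < ∞ := ENNReal.add_lt_top.2 ⟨hI, (setLIntegral_le_lintegral _ _).trans_lt hGp⟩
  have hlt : (∫⁻ z in P, G z) ^ q < ∞ :=
    (rpow_setLIntegral_le_of_isWeight hq hw hG hP.measurableSet).trans_lt
      (ENNReal.mul_lt_top hGq (ENNReal.rpow_lt_top_of_nonneg (by linarith) hJ.ne))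
  exact (ENNReal.rpow_lt_top_iff_of_pos (zero_lt_one.trans hq)).1 hlt

end

end Weights

/-! ### Dyadic cells and slabs -/

section Dyadic

variable {n d : ℕ}

/-- The index `m` of the half-open dyadic cube of side `2^{-k}` that contains `x`. -/
def dyadicIndex (k : ℕ) (x : Rn n) : Fin n → ℤ := fun i => ⌊(2 : ℝ) ^ k * x i⌋

lemma mem_dyadicCubeHalf_iff (k : ℕ) (x : Rn n) (m : Fin n → ℤ) :
    x ∈ dyadicCubeHalf n k m ↔ dyadicIndex k x = m := by
  have h2 : (0 : ℝ) < 2 ^ k := by positivity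
  simp only [dyadicCubeHalf, Set.mem_ofPred_eq, dyadicIndex, funext_iff, Int.floor_eq_iff,
    div_le_iff₀' h2, lt_div_iff₀' h2]

lemma measurable_dyadicIndex (k : ℕ) : Measurable (dyadicIndex k : Rn n → Fin n → ℤ) :=
  measurable_pi_lambda _ fun i => Int.measurable_floor.comp ((measurable_pi_apply i).const_mul _)

lemma dyadicIndex_eq_ediv (k i : ℕ) (x : Rn n) :
    dyadicIndex k x = fun a => dyadicIndex (k + i) x a / (2 : ℤ) ^ i := by
  funext a
  have : (2 : ℝ) ^ k * x a = (2 : ℝ) ^ (k + i) * x a / ((2 ^ i : ℕ) : ℝ) := by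
    push_cast; rw [pow_add]; field_simp
  simp only [dyadicIndex]
  rw [this, Int.floor_div_natCast]
  push_cast; rfl

/-- The index of the dyadic cube of twice the side containing the cube of index `m`. -/
def parentIndex (m : Fin n → ℤ) : Fin n → ℤ := fun a => m a / 2

lemma parentIndex_dyadicIndex (k : ℕ) (x : Rn n) :
    parentIndex (dyadicIndex (k + 1) x) = dyadicIndex k x :=
  (dyadicIndex_eq_ediv k 1 x).symm

lemma tsum_indicator_dyadicCubeHalf (k : ℕ) (T : (Fin n → ℤ) → ℝ≥0∞) (x : Rn n) :
    ∑' m : Fin n → ℤ, (dyadicCubeHalf n k m).indicator (fun _ => T m) x = T (dyadicIndex k x) := by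
  rw [tsum_eq_single (dyadicIndex k x) fun m hm => Set.indicator_of_notMem
    (fun h => hm ((mem_dyadicCubeHalf_iff k x m).1 h).symm) _,
    Set.indicator_of_mem ((mem_dyadicCubeHalf_iff k x _).2 rfl)]

/-- The slab `{(x, y) : |y|_∞ < 2^{-k-2}}` around the plane `y = 0`. -/
def slab (n d k : ℕ) : Set (Rn (n + d)) := {z | ‖(projY z : Rn d)‖ < ((2 : ℝ) ^ (k + 2))⁻¹}

lemma measurableSet_slab (n d k : ℕ) : MeasurableSet (slab n d k) :=
  (isOpen_lt projY.continuous.norm continuous_const).measurableSet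

lemma antitone_slab (n d : ℕ) : Antitone (slab n d) := by
  refine antitone_nat_of_succ_le fun k z (hz : ‖(projY z : Rn d)‖ < _) => hz.trans_le ?_
  gcongr <;> norm_num

lemma volume_iInter_slab (hd : 0 < d) : volume (⋂ k, slab n d k) = 0 := by
  have hplane : volume {z : Rn (n + d) | z (Fin.natAdd n ⟨0, hd⟩) = 0} = 0 := by
    rw [volume_pi]; exact Measure.pi_hyperplane (fun _ => (volume : Measure ℝ)) _ _
  refine measure_mono_null (fun z hz => ?_) hplane
  have hlim : Tendsto (fun k : ℕ => ((2 : ℝ) ^ (k + 2))⁻¹) atTop (nhds 0) := by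
    simp_rw [← inv_pow]
    exact (tendsto_add_atTop_iff_nat 2).2
      (tendsto_pow_atTop_nhds_zero_of_lt_one (by norm_num) (by norm_num))
  have hnorm : ‖(projY z : Rn d)‖ ≤ 0 :=
    ge_of_tendsto' hlim fun k => (Set.mem_iInter.1 hz k).le
  exact congrFun (norm_le_zero_iff.1 hnorm) ⟨0, hd⟩

/-- The cylinder over the half-open dyadic cube of side `2^{-k}` and index `m`. -/
def dyadicCylinder (n d k : ℕ) (m : Fin n → ℤ) : Set (Rn (n + d)) :=
  {z | dyadicIndex k (projX z) = m}

lemma measurable_dyadicIndex_projX (k : ℕ) :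
    Measurable fun z : Rn (n + d) => dyadicIndex k (projX z) :=
  (measurable_dyadicIndex k).comp projX.continuous.measurable

lemma measurable_comp_dyadicIndex (k : ℕ) (b : (Fin n → ℤ) → ℝ≥0∞) :
    Measurable fun z : Rn (n + d) => b (dyadicIndex k (projX z)) :=
  (measurable_of_countable b).comp (measurable_dyadicIndex_projX k)

lemma setLIntegral_comp_dyadicIndex (μ : Measure (Rn (n + d))) (A : Set (Rn (n + d))) (k : ℕ)
    (b : (Fin n → ℤ) → ℝ≥0∞) :
    ∫⁻ z in A, b (dyadicIndex k (projX z)) ∂μ = ∑' m, b m * μ (A ∩ dyadicCylinder n d k m) := by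
  rw [← lintegral_map (measurable_of_countable b) (measurable_dyadicIndex_projX k),
    lintegral_countable']
  refine tsum_congr fun m => ?_
  rw [Measure.map_apply (measurable_dyadicIndex_projX k) (measurableSet_singleton m),
    Measure.restrict_apply (measurable_dyadicIndex_projX k (measurableSet_singleton m)),
    Set.inter_comm]
  rfl

/-- The lower corner of the box `{|y|_∞ ≤ 2^{-k-2}}` over the dyadic cube of side `2^{-q}` and
index `m`. -/
def slabCorner (d k q : ℕ) (m : Fin n → ℤ) : Rn (n + d) :=
  Fin.append (fun i => (m i : ℝ) / 2 ^ q) fun _ => -((2 : ℝ) ^ (k + 2))⁻¹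

lemma slab_inter_dyadicCylinder_subset_Icc {k q : ℕ} (hqk : q ≤ k + 1) (m : Fin n → ℤ) :
    slab n d k ∩ dyadicCylinder n d q m ⊆
      Set.Icc (slabCorner d k q m) fun i => slabCorner d k q m i + ((2 : ℝ) ^ q)⁻¹ := by
  rintro z ⟨hy, hx⟩
  have hx := (mem_dyadicCubeHalf_iff q _ _).2 hx
  have hside : 2 * ((2 : ℝ) ^ (k + 2))⁻¹ ≤ ((2 : ℝ) ^ q)⁻¹ := by
    rw [pow_succ (2 : ℝ) (k + 1), mul_inv, mul_left_comm, mul_inv_cancel₀ two_ne_zero, mul_one]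
    gcongr
    norm_num
  simp only [Set.mem_Icc, Pi.le_def, ← forall_and]
  refine Fin.addCases (fun i => ?_) fun i => ?_
  · obtain ⟨h0, h1⟩ := hx i
    simp only [slabCorner, Fin.append_left]
    rw [add_div, one_div] at h1
    exact ⟨h0, h1.le⟩
  · have := abs_lt.1 ((norm_le_pi_norm (projY z : Rn d) i).trans_lt hy)
    simp only [slabCorner, Fin.append_right]
    simp only [projY, ContinuousLinearMap.coe_pi', ContinuousLinearMap.proj_apply] at this
    constructor <;> linarith

lemma euclNorm_smul {s : ℝ} (hs : 0 ≤ s) (v : Rn d) : euclNorm (s • v) = s * euclNorm v := by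
  simp only [euclNorm, Pi.smul_apply, smul_eq_mul, mul_pow, ← Finset.mul_sum]
  rw [Real.sqrt_mul (sq_nonneg s), Real.sqrt_sq hs]

lemma euclNorm_single (i : Fin d) {a : ℝ} (ha : 0 ≤ a) : euclNorm (Pi.single i a) = a := by
  simp only [euclNorm, Pi.single_apply, ite_pow, ne_eq, OfNat.ofNat_ne_zero, not_false_eq_true,
    zero_pow, Finset.sum_ite_eq', Finset.mem_univ, if_true, Real.sqrt_sq ha]

lemma continuous_euclNorm : Continuous (euclNorm : Rn d → ℝ) := by
  unfold euclNorm; fun_prop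

lemma projX_slabCorner (k q : ℕ) (m : Fin n → ℤ) :
    projX (slabCorner d k q m) = fun i => (m i : ℝ) / 2 ^ q := projX_append _ _

lemma projY_slabCorner (k q : ℕ) (m : Fin n → ℤ) :
    projY (slabCorner d k q m) = fun _ => -((2 : ℝ) ^ (k + 2))⁻¹ := projY_append _ _

lemma projX_slabCorner_vadd_mem_dyadicCube (k q : ℕ) (m : Fin n → ℤ) {u : Rn (n + d)}
    (hu : u ∈ cubeAt (0 : Rn (n + d)) 1) :
    projX (slabCorner d k q m +ᵥ ((2 : ℝ) ^ q)⁻¹ • u) ∈ dyadicCube n q m := by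
  intro i
  obtain ⟨h0, h1⟩ := hu (Fin.castAdd d i)
  simp only [Pi.zero_apply, zero_add] at h0 h1
  have h2 : (0 : ℝ) < ((2 : ℝ) ^ q)⁻¹ := by positivity
  have hui : (projX u : Rn n) i = u (Fin.castAdd d i) := rfl
  simp only [vadd_eq_add, map_add, map_smul, projX_slabCorner, Pi.add_apply, Pi.smul_apply,
    smul_eq_mul, hui, add_div, one_div]
  constructor <;> nlinarith

lemma dyadicCube_subset_dyadicCubeHalf (k : ℕ) (m : Fin n → ℤ) :
    dyadicCube n k m ⊆ dyadicCubeHalf n k m := fun _ hx i => ⟨(hx i).1.le, (hx i).2⟩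

end Dyadic

/-! ### Decay of a Muckenhoupt weight near the plane `y = 0` -/

section WeightDecay

open scoped Pointwise

variable {n d : ℕ} {q : ℝ} {w : Rn (n + d) → ℝ}

lemma exists_weightMeasure_slab_le_sdiff (hA : MemAlocGt (n + d) q w) (hq : 1 < q)
    (hw : IsWeight w) (hd : 0 < d) :
    ∃ M < ∞, ∀ (k : ℕ) (m : Fin n → ℤ),
      weightMeasure w (slab n d k ∩ dyadicCylinder n d (k + 1) m) ≤
        M * weightMeasure w ((slab n d k \ slab n d (k + 1)) ∩ dyadicCylinder n d (k + 1) m) := by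
  set i₀ : Fin d := ⟨0, hd⟩
  set E : Set (Rn (n + d)) := cubeAt 0 1 ∩ {u | 3 / 4 < (projY u : Rn d) i₀}
  have hE : IsOpen E := (isOpen_cubeAt _ _).inter
    (isOpen_lt continuous_const ((continuous_apply i₀).comp projY.continuous))
  have hE' : E.Nonempty := ⟨fun _ => 7 / 8, fun _ => by norm_num, by
    change (3 / 4 : ℝ) < 7 / 8; norm_num⟩
  obtain ⟨M, hM, h⟩ := hA.exists_weightMeasure_Icc_le hq hw hE.measurableSet
    Set.inter_subset_left (hE.measure_pos volume hE').ne'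
  refine ⟨M, hM, fun k m => ?_⟩
  set s : ℝ := ((2 : ℝ) ^ (k + 1))⁻¹
  have hs : 0 < s := by positivity
  have hs2 : ((2 : ℝ) ^ (k + 2))⁻¹ = s / 2 := by rw [pow_succ (2 : ℝ) (k + 1), mul_inv]; rfl
  have hs4 : ((2 : ℝ) ^ (k + 1 + 2))⁻¹ = s / 4 := by
    rw [pow_add (2 : ℝ) (k + 1), mul_inv]; norm_num [s, div_eq_mul_inv]
  refine (measure_mono (slab_inter_dyadicCylinder_subset_Icc le_rfl m)).trans
    ((h _ s hs (inv_le_one_of_one_le₀ (one_le_pow₀ one_le_two))).trans ?_)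
  gcongr
  rintro _ ⟨_, ⟨u, ⟨hu, hu₀⟩, rfl⟩, rfl⟩
  have hy : ∀ i, (projY (slabCorner d k (k + 1) m +ᵥ s • u) : Rn d) i =
      s * u (Fin.natAdd n i) - s / 2 := fun i => by
    simp only [vadd_eq_add, map_add, map_smul, projY_slabCorner, hs2]
    exact neg_add_eq_sub _ _
  refine ⟨⟨?_, fun hmem => ?_⟩, (mem_dyadicCubeHalf_iff _ _ _).1
    (dyadicCube_subset_dyadicCubeHalf _ _ (projX_slabCorner_vadd_mem_dyadicCube k _ m hu))⟩
  · refine (pi_norm_lt_iff (by positivity)).2 fun i => ?_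
    obtain ⟨h0, h1⟩ := hu (Fin.natAdd n i)
    simp only [Pi.zero_apply, zero_add] at h0 h1
    rw [Real.norm_eq_abs, hy, hs2, abs_lt]
    constructor <;> nlinarith
  · have hlt := (le_abs_self _).trans_lt ((norm_le_pi_norm (projY _ : Rn d) i₀).trans_lt hmem)
    have hu₀ : 3 / 4 < u (Fin.natAdd n i₀) := hu₀
    rw [hy, hs4] at hlt
    nlinarith

lemma nonempty_cubeAt_inter_shell (hd : 0 < d) :
    (cubeAt (0 : Rn (n + d)) 1 ∩ {u | 1 / 2 < euclNorm (projY u - fun _ => (1 / 4 : ℝ)) ∧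
      euclNorm (projY u - fun _ => (1 / 4 : ℝ)) < 1}).Nonempty := by
  set v : Rn d := Pi.single ⟨0, hd⟩ (5 / 8)
  set u : Rn (n + d) := Fin.append (fun _ => 1 / 2) ((fun _ => 1 / 4) + v)
  have hu : euclNorm (projY u - fun _ => (1 / 4 : ℝ)) = 5 / 8 := by
    rw [projY_append, add_sub_cancel_left, euclNorm_single _ (by norm_num)]
  have hu₀ : u ∈ cubeAt (0 : Rn (n + d)) 1 := by
    intro i
    induction i using Fin.addCases with
    | left i => rw [show u (Fin.castAdd d i) = 1 / 2 from Fin.append_left _ _ i]; norm_num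
    | right i =>
      rw [show u (Fin.natAdd n i) = 1 / 4 + v i from Fin.append_right _ _ i]
      simp only [v, Pi.single_apply]
      split_ifs <;> norm_num
  exact ⟨u, hu₀, by rw [Set.mem_ofPred_eq, hu]; norm_num⟩

lemma exists_weightMeasure_slab_le_Xi (hA : MemAlocGt (n + d) q w) (hq : 1 < q)
    (hw : IsWeight w) (hd : 0 < d) :
    ∃ M < ∞, ∀ (k : ℕ) (m : Fin n → ℤ),
      weightMeasure w (slab n d k ∩ dyadicCylinder n d (k + 1) m) ≤
        M * weightMeasure w (Xi n d k (parentIndex m)) := by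
  set f : Rn (n + d) → ℝ := fun u => euclNorm (projY u - fun _ => (1 / 4 : ℝ))
  have hf : Continuous f := continuous_euclNorm.comp (projY.continuous.sub continuous_const)
  set E : Set (Rn (n + d)) := cubeAt 0 1 ∩ {u | 1 / 2 < f u ∧ f u < 1}
  have hE : IsOpen E := (isOpen_cubeAt _ _).inter
    ((isOpen_lt continuous_const hf).inter (isOpen_lt hf continuous_const))
  obtain ⟨M, hM, h⟩ := hA.exists_weightMeasure_Icc_le hq hw hE.measurableSet
    Set.inter_subset_left (hE.measure_pos volume (nonempty_cubeAt_inter_shell hd)).ne'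
  refine ⟨M, hM, fun k m => ?_⟩
  set s : ℝ := ((2 : ℝ) ^ k)⁻¹
  have hs : 0 < s := by positivity
  have hs4 : ((2 : ℝ) ^ (k + 2))⁻¹ = s / 4 := by
    rw [pow_add, mul_inv]; norm_num [s, div_eq_mul_inv]
  have hsub : slab n d k ∩ dyadicCylinder n d (k + 1) m ⊆
      slab n d k ∩ dyadicCylinder n d k (parentIndex m) := fun z hz =>
    ⟨hz.1, (parentIndex_dyadicIndex k _).symm.trans (congrArg parentIndex hz.2)⟩
  refine (measure_mono (hsub.trans (slab_inter_dyadicCylinder_subset_Icc k.le_succ _))).trans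
    ((h _ s hs (inv_le_one_of_one_le₀ (one_le_pow₀ one_le_two))).trans ?_)
  gcongr
  rintro _ ⟨_, ⟨u, ⟨hu, hu1, hu2⟩, rfl⟩, rfl⟩
  have hy : euclNorm (projY (slabCorner d k k (parentIndex m) +ᵥ s • u)) = s * f u := by
    rw [← euclNorm_smul hs.le]
    congr 1
    ext i
    simp only [vadd_eq_add, map_add, map_smul, projY_slabCorner, hs4, Pi.add_apply, Pi.smul_apply,
      Pi.sub_apply, smul_eq_mul]
    ring
  refine ⟨projX_slabCorner_vadd_mem_dyadicCube k k _ hu, hy.trans_lt ?_, le_trans ?_ hy.ge⟩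
  · rw [zpow_neg, zpow_natCast]
    exact mul_lt_of_lt_one_right hs hu2
  · rw [zpow_sub₀ two_ne_zero, zpow_neg, zpow_natCast, zpow_one]
    change s / 2 ≤ _
    nlinarith

lemma setLIntegral_le_of_le_mul_sdiff {α : Type*} [MeasurableSpace α] {μ : Measure α}
    {S T : Set α} (hTS : T ⊆ S) (hT : MeasurableSet T) {f : α → ℝ≥0∞} {M : ℝ≥0∞} (hM1 : 1 < M)
    (hM : M ≠ ∞) (h : ∫⁻ z in S, f z ∂μ ≤ M * ∫⁻ z in S \ T, f z ∂μ) :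
    ∫⁻ z in T, f z ∂μ ≤ (1 - M⁻¹) * ∫⁻ z in S, f z ∂μ := by
  rcases eq_or_ne (∫⁻ z in S, f z ∂μ) ∞ with hS | hS
  · rw [hS, ENNReal.mul_top (tsub_pos_of_lt (ENNReal.inv_lt_one.2 hM1)).ne']
    exact le_top
  rw [ENNReal.sub_mul fun _ _ => hS, one_mul]
  have hinv : M⁻¹ * ∫⁻ z in S, f z ∂μ ≤ ∫⁻ z in S \ T, f z ∂μ := by
    rwa [ENNReal.inv_mul_le_iff (zero_lt_one.trans hM1).ne' hM]
  refine ENNReal.le_sub_of_add_le_left (ne_top_of_le_ne_top hS (hinv.trans ?_)) ?_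
  · exact lintegral_mono_set Set.sdiff_subset
  · calc M⁻¹ * ∫⁻ z in S, f z ∂μ + ∫⁻ z in T, f z ∂μ
        ≤ ∫⁻ z in S \ T, f z ∂μ + ∫⁻ z in T, f z ∂μ := by gcongr
      _ = ∫⁻ z in S, f z ∂μ := by
        rw [add_comm, ← lintegral_inter_add_sdiff f S hT, Set.inter_eq_right.2 hTS]

lemma exists_setLIntegral_slab_decay (hA : MemAlocGt (n + d) q w) (hq : 1 < q) (hw : IsWeight w)
    (hd : 0 < d) :
    ∃ θ < (1 : ℝ≥0∞), ∀ (j : ℕ) (b : (Fin n → ℤ) → ℝ≥0∞) (i : ℕ),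
      ∫⁻ z in slab n d (j + i), b (dyadicIndex (j + 1) (projX z)) ∂(weightMeasure w) ≤
        θ ^ i * ∫⁻ z in slab n d j, b (dyadicIndex (j + 1) (projX z)) ∂(weightMeasure w) := by
  obtain ⟨M, hM, h⟩ := exists_weightMeasure_slab_le_sdiff hA hq hw hd
  have hM2 : M + 2 ≠ ∞ := ENNReal.add_ne_top.2 ⟨hM.ne, ENNReal.ofNat_ne_top⟩
  have hle : M ≤ M + 2 := le_self_add
  refine ⟨1 - (M + 2)⁻¹, ENNReal.sub_lt_self one_ne_top one_ne_zero (ENNReal.inv_ne_zero.2 hM2),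
    fun j b i => ?_⟩
  induction i with
  | zero => rw [pow_zero, one_mul, add_zero]
  | succ i ih =>
    obtain ⟨b', hb⟩ : ∃ b' : (Fin n → ℤ) → ℝ≥0∞, ∀ z : Rn (n + d),
        b (dyadicIndex (j + 1) (projX z)) = b' (dyadicIndex (j + i + 1) (projX z)) :=
      ⟨fun m => b fun a => m a / (2 : ℤ) ^ i, fun z => by
        rw [dyadicIndex_eq_ediv (j + 1) i, add_right_comm]⟩
    rw [pow_succ', mul_assoc]
    refine (setLIntegral_le_of_le_mul_sdiff (antitone_slab n d (j + i).le_succ)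
      (measurableSet_slab n d _) (lt_add_of_nonneg_of_lt zero_le one_lt_two) hM2 ?_).trans
      (mul_le_mul_right ih _)
    rw [lintegral_congr hb, lintegral_congr hb, setLIntegral_comp_dyadicIndex,
      setLIntegral_comp_dyadicIndex, ← ENNReal.tsum_mul_left]
    refine ENNReal.tsum_le_tsum fun m => ?_
    rw [mul_left_comm]
    exact mul_le_mul_right ((h (j + i) m).trans (by gcongr)) _

end WeightDecay

/-! ### A Hardy-type estimate -/

section Hardy

variable {α : Type*}

lemma tsum_indicator_rpow {A : ℕ → Set α} (hA : Pairwise (Function.onFun Disjoint A))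
    (g : ℕ → α → ℝ≥0∞) {p : ℝ} (hp : 0 < p) (z : α) :
    (∑' j, (A j).indicator (g j) z) ^ p = ∑' j, (A j).indicator (fun z => g j z ^ p) z := by
  by_cases hz : ∃ j, z ∈ A j
  · obtain ⟨j, hj⟩ := hz
    have hne : ∀ i ≠ j, z ∉ A i := fun i hi => (hA hi).notMem_of_mem_right hj
    rw [tsum_eq_single j fun i hi => Set.indicator_of_notMem (hne i hi) _,
      tsum_eq_single j fun i hi => Set.indicator_of_notMem (hne i hi) _,
      Set.indicator_of_mem hj, Set.indicator_of_mem hj]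
  · have hz : ∀ j, z ∉ A j := not_exists.1 hz
    simp only [Set.indicator_of_notMem (hz _), tsum_zero, ENNReal.zero_rpow_of_pos hp]

section Antitone

variable {S : ℕ → Set α}

lemma pairwise_disjoint_sdiff_succ (hS : Antitone S) :
    Pairwise (Function.onFun Disjoint fun k => S k \ S (k + 1)) :=
  (pairwise_disjoint_on _).2 fun _ _ h =>
    Set.disjoint_sdiff_left.mono_right (Set.sdiff_subset.trans (hS h))

lemma indicator_eq_tsum_indicator_sdiff (hS : Antitone S) {z : α} (hz : z ∉ ⋂ k, S k) (j : ℕ)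
    (f : α → ℝ≥0∞) :
    (S j).indicator f z = ∑' i, (S (j + i) \ S (j + i + 1)).indicator f z := by
  by_cases hj : z ∈ S j
  · have hex : ∃ i, z ∉ S (j + i) := by
      obtain ⟨k, hk⟩ := not_forall.1 (mt Set.mem_iInter.2 hz)
      exact ⟨k, mt (fun h => hS (k.le_add_left j) h) hk⟩
    obtain ⟨i, hi⟩ : ∃ i, Nat.find hex = i + 1 :=
      Nat.exists_eq_succ_of_ne_zero fun h0 => Nat.find_spec hex (by rwa [h0])
    have hmem : z ∈ S (j + i) \ S (j + i + 1) :=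
      ⟨not_not.1 (Nat.find_min hex (hi ▸ i.lt_succ_self)), by
        rw [add_assoc, ← hi]; exact Nat.find_spec hex⟩
    have hne : ∀ i' ≠ i, z ∉ S (j + i') \ S (j + i' + 1) := fun i' hi' =>
      (pairwise_disjoint_sdiff_succ hS ((add_right_injective j).ne hi')).notMem_of_mem_right hmem
    rw [tsum_eq_single i fun i' hi' => Set.indicator_of_notMem (hne i' hi') _,
      Set.indicator_of_mem hj, Set.indicator_of_mem hmem]
  · rw [Set.indicator_of_notMem hj, eq_comm, ENNReal.tsum_eq_zero]
    exact fun i => Set.indicator_of_notMem (fun h => hj (hS (j.le_add_right i) h.1)) _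

end Antitone

variable [MeasurableSpace α] {μ : Measure α} {p : ℝ}

lemma lintegral_tsum_rpow_le {H : ℕ → α → ℝ≥0∞} (hH : ∀ i, Measurable (H i)) (hp : 1 ≤ p) :
    (∫⁻ z, (∑' i, H i z) ^ p ∂μ) ^ (1 / p) ≤ ∑' i, (∫⁻ z, H i z ^ p ∂μ) ^ (1 / p) := by
  have hlim : Tendsto (fun N => ∫⁻ z, (∑ i ∈ Finset.range N, H i z) ^ p ∂μ) atTop
      (nhds (∫⁻ z, (∑' i, H i z) ^ p ∂μ)) := by
    refine lintegral_tendsto_of_tendsto_of_monotone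
      (fun N => ((Finset.measurable_fun_sum _ fun i _ => hH i).pow_const _).aemeasurable)
      (ae_of_all _ fun z a b hab => ?_) (ae_of_all _ fun z => ?_)
    · dsimp only
      gcongr
    · exact (ENNReal.continuous_rpow_const.tendsto _).comp ENNReal.summable.hasSum.tendsto_sum_nat
  refine le_of_tendsto' ((ENNReal.continuous_rpow_const.tendsto _).comp hlim) fun N => ?_
  have hsum := eLpNorm'_sum_le (μ := μ) (s := Finset.range N)
    (fun i _ => (hH i).aestronglyMeasurable) hp
  simp only [eLpNorm', enorm_eq_self, Finset.sum_apply] at hsum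
  exact hsum.trans (ENNReal.sum_le_tsum _)

lemma lintegral_tsum_indicator_rpow_le {S : ℕ → Set α} (hS : Antitone S)
    (hSm : ∀ k, MeasurableSet (S k)) (hS0 : μ (⋂ k, S k) = 0) {g : ℕ → α → ℝ≥0∞}
    (hg : ∀ j, Measurable (g j)) (hp : 1 ≤ p) {θ : ℝ≥0∞}
    (hdecay : ∀ j i, ∫⁻ z in S (j + i), g j z ^ p ∂μ ≤ θ ^ i * ∫⁻ z in S j, g j z ^ p ∂μ) :
    (∫⁻ z, (∑' j, (S j).indicator (g j) z) ^ p ∂μ) ^ (1 / p) ≤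
      (1 - θ ^ (1 / p))⁻¹ * (∑' j, ∫⁻ z in S j, g j z ^ p ∂μ) ^ (1 / p) := by
  have hp0 : 0 < p := one_pos.trans_le hp
  set A : ℕ → Set α := fun k => S k \ S (k + 1)
  have hAm : ∀ k, MeasurableSet (A k) := fun k => (hSm k).diff (hSm (k + 1))
  set H : ℕ → α → ℝ≥0∞ := fun i z => ∑' j, (A (j + i)).indicator (g j) z
  have hsum : ∀ᵐ z ∂μ, ∑' j, (S j).indicator (g j) z = ∑' i, H i z := by
    filter_upwards [measure_eq_zero_iff_ae_notMem.1 hS0] with z hz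
    rw [ENNReal.tsum_comm]
    exact tsum_congr fun j => indicator_eq_tsum_indicator_sdiff hS hz j _
  have hH : ∀ i, ∫⁻ z, H i z ^ p ∂μ ≤ θ ^ i * ∑' j, ∫⁻ z in S j, g j z ^ p ∂μ := fun i => by
    have hdisj : Pairwise (Function.onFun Disjoint fun j => A (j + i)) :=
      (pairwise_disjoint_sdiff_succ hS).comp_of_injective (add_left_injective i)
    simp only [H, tsum_indicator_rpow hdisj g hp0]
    rw [lintegral_tsum fun j => (((hg j).pow_const p).indicator (hAm _)).aemeasurable,
      ← ENNReal.tsum_mul_left]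
    refine ENNReal.tsum_le_tsum fun j => ?_
    rw [lintegral_indicator (hAm _)]
    exact (lintegral_mono_set Set.sdiff_subset).trans (hdecay j i)
  calc (∫⁻ z, (∑' j, (S j).indicator (g j) z) ^ p ∂μ) ^ (1 / p)
      = (∫⁻ z, (∑' i, H i z) ^ p ∂μ) ^ (1 / p) := by
        rw [lintegral_congr_ae (hsum.mono fun z hz => by rw [hz])]
    _ ≤ ∑' i, (∫⁻ z, H i z ^ p ∂μ) ^ (1 / p) :=
        lintegral_tsum_rpow_le
          (fun i => Measurable.tsum fun j => (hg j).indicator (hAm (j + i))) hp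
    _ ≤ ∑' i : ℕ, (θ ^ (1 / p)) ^ i * (∑' j, ∫⁻ z in S j, g j z ^ p ∂μ) ^ (1 / p) := by
        refine ENNReal.tsum_le_tsum fun i => ?_
        rw [← ENNReal.rpow_natCast, ← ENNReal.rpow_mul, mul_comm (1 / p), ENNReal.rpow_mul,
          ENNReal.rpow_natCast, ← ENNReal.mul_rpow_of_nonneg _ _ (by positivity)]
        exact ENNReal.rpow_le_rpow (hH i) (by positivity)
    _ = _ := by rw [ENNReal.tsum_mul_right, ENNReal.tsum_geometric]

end Hardy

section Majorant

variable {n d : ℕ} {p q : ℝ} {w : Rn (n + d) → ℝ}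

/-- The function `Σ_j χ_{slab j} b_j`, where `b_j` is constant on the dyadic cells of side
`2^{-j-1}`: the common majorant of the extension and of its derivatives. -/
def dyadicMajorant (d : ℕ) (b : ℕ → (Fin n → ℤ) → ℝ≥0∞) (z : Rn (n + d)) : ℝ≥0∞ :=
  ∑' j, (slab n d j).indicator (fun z => b j (dyadicIndex (j + 1) (projX z))) z

lemma measurable_dyadicMajorant (b : ℕ → (Fin n → ℤ) → ℝ≥0∞) : Measurable (dyadicMajorant d b) :=
  Measurable.tsum fun j =>
    (measurable_comp_dyadicIndex _ (b j)).indicator (measurableSet_slab n d j)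

lemma exists_lintegral_dyadicMajorant_rpow_le (hA : MemAlocGt (n + d) q w) (hq : 1 < q)
    (hw : IsWeight w) (hd : 0 < d) (hp : 1 ≤ p) :
    ∃ C < ∞, ∀ b : ℕ → (Fin n → ℤ) → ℝ≥0∞,
      (∫⁻ z, dyadicMajorant d b z ^ p ∂(weightMeasure w)) ^ (1 / p) ≤
        C * (∑' j, ∑' m, b j m ^ p * weightMeasure w (Xi n d j (parentIndex m))) ^ (1 / p) := by
  have hp0 : 0 ≤ 1 / p := by positivity
  obtain ⟨M, hM, hXi⟩ := exists_weightMeasure_slab_le_Xi hA hq hw hd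
  obtain ⟨θ, hθ, hdecay⟩ := exists_setLIntegral_slab_decay hA hq hw hd
  have hnull : weightMeasure w (⋂ k, slab n d k) = 0 :=
    weightMeasure_absolutelyContinuous w (volume_iInter_slab hd)
  refine ⟨(1 - θ ^ (1 / p))⁻¹ * M ^ (1 / p), ENNReal.mul_lt_top ?_
    (ENNReal.rpow_lt_top_of_nonneg hp0 hM.ne), fun b => ?_⟩
  · rw [ENNReal.inv_lt_top, tsub_pos_iff_lt]
    exact ENNReal.rpow_lt_one hθ (by positivity)
  refine (lintegral_tsum_indicator_rpow_le (antitone_slab n d) (measurableSet_slab n d) hnull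
    (fun j => measurable_comp_dyadicIndex _ (b j)) hp
    fun j i => hdecay j (fun m => b j m ^ p) i).trans ?_
  rw [mul_assoc, ← ENNReal.mul_rpow_of_nonneg _ _ hp0, ← ENNReal.tsum_mul_left]
  gcongr with j
  rw [setLIntegral_comp_dyadicIndex _ _ _ fun m => b j m ^ p, ← ENNReal.tsum_mul_left]
  refine ENNReal.tsum_le_tsum fun m => ?_
  rw [mul_left_comm]
  exact mul_le_mul_right (hXi j m) _

end Majorant

/-! ### Series of smooth functions with a locally integrable majorant -/

section Series

variable {N : ℕ}

lemma length_multiIdxList (α : Fin N → ℕ) : (multiIdxList α).length = ∑ i, α i := by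
  rw [Fin.sum_univ_def, multiIdxList]
  induction List.finRange N with
  | nil => rfl
  | cons a L ih =>
    rw [List.foldr_cons, List.length_append, ih, List.length_replicate, List.map_cons,
      List.sum_cons]

lemma multiIdxList_zero : multiIdxList (0 : Fin N → ℕ) = [] := by
  rw [← List.length_eq_zero_iff, length_multiIdxList]
  exact Finset.sum_const_zero

/-- The sum of the derivatives of order `α` of the functions `F j`: the candidate for the weak
derivative `D^α` of `Σ_j F j`. The list of directions is reversed because that is the order in
which integration by parts produces them. -/
def tsumDeriv (F : ℕ → Rn N → ℝ) (α : Fin N → ℕ) : Rn N → ℝ :=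
  fun z => ∑' j, iterPD (multiIdxList α).reverse (F j) z

lemma tsumDeriv_zero (F : ℕ → Rn N → ℝ) : tsumDeriv F 0 = fun z => ∑' j, F j z := by
  funext z
  rw [tsumDeriv, multiIdxList_zero]
  rfl

lemma setLIntegral_lt_top_of_isCompact {G : Rn N → ℝ≥0∞}
    (hG : ∀ x, ∃ U ∈ nhds x, ∫⁻ z in U, G z < ∞) {K : Set (Rn N)} (hK : IsCompact K) :
    ∫⁻ z in K, G z < ∞ := by
  rw [← withDensity_apply' G K]
  refine hK.measure_lt_top_of_nhdsWithin fun x _ => ?_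
  obtain ⟨U, hU, h⟩ := hG x
  exact ⟨U, mem_nhdsWithin_of_mem_nhds hU, by rwa [withDensity_apply']⟩

variable {F : ℕ → Rn N → ℝ} {a : ℕ → Rn N → ℝ≥0∞} {C C' : ℝ≥0∞}

lemma measurable_tsumDeriv (hF : ∀ j, ContDiff ℝ (⊤ : ℕ∞) (F j)) (α : Fin N → ℕ) :
    Measurable (tsumDeriv F α) :=
  Measurable.tsum fun j => (contDiff_iterPD _ (hF j)).continuous.measurable

lemma enorm_tsumDeriv_le (α : Fin N → ℕ)
    (h : ∀ j z, ‖iterPD (multiIdxList α).reverse (F j) z‖ₑ ≤ C * a j z) (z : Rn N) :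
    ‖tsumDeriv F α z‖ₑ ≤ C * ∑' j, a j z := by
  rw [← ENNReal.tsum_mul_left]
  exact enorm_tsum_le_tsum_enorm.trans (ENNReal.tsum_le_tsum fun j => h j z)

lemma locallyIntegrable_tsumDeriv (hF : ∀ j, ContDiff ℝ (⊤ : ℕ∞) (F j)) (hC : C < ∞)
    (ha : ∀ x, ∃ U ∈ nhds x, ∫⁻ z in U, ∑' j, a j z < ∞) (α : Fin N → ℕ)
    (h : ∀ j z, ‖iterPD (multiIdxList α).reverse (F j) z‖ₑ ≤ C * a j z) :
    LocallyIntegrable (tsumDeriv F α) := by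
  intro x
  obtain ⟨U, hU, hUa⟩ := ha x
  refine ⟨U, hU, (measurable_tsumDeriv hF α).aestronglyMeasurable, ?_⟩
  calc ∫⁻ z in U, ‖tsumDeriv F α z‖ₑ ≤ ∫⁻ z in U, C * ∑' j, a j z :=
        lintegral_mono fun z => enorm_tsumDeriv_le α h z
    _ = C * ∫⁻ z in U, ∑' j, a j z := lintegral_const_mul' _ _ hC.ne
    _ < ∞ := ENNReal.mul_lt_top hC hUa

lemma integral_tsum_mul (hF : ∀ j, Continuous (F j)) (hC : C < ∞)
    (ha : ∀ x, ∃ U ∈ nhds x, ∫⁻ z in U, ∑' j, a j z < ∞) (h : ∀ j z, ‖F j z‖ₑ ≤ C * a j z)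
    {ψ : Rn N → ℝ} (hψ : Continuous ψ) (hψc : HasCompactSupport ψ) :
    ∫ z, (∑' j, F j z) * ψ z = ∑' j, ∫ z, F j z * ψ z := by
  simp_rw [← tsum_mul_right]
  refine integral_tsum (fun j => ((hF j).mul hψ).aestronglyMeasurable) (ne_of_lt ?_)
  obtain ⟨B, hB⟩ := hψ.bounded_above_of_compact_support hψc
  have hCB : C * ENNReal.ofReal B < ∞ := ENNReal.mul_lt_top hC ofReal_lt_top
  rw [← lintegral_tsum (f := fun j z => ‖F j z * ψ z‖ₑ)
    fun j => ((hF j).mul hψ).enorm.measurable.aemeasurable]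
  calc ∫⁻ z, ∑' j, ‖F j z * ψ z‖ₑ
      ≤ ∫⁻ z, (tsupport ψ).indicator (fun z => C * ENNReal.ofReal B * ∑' j, a j z) z := by
        refine lintegral_mono fun z => ?_
        by_cases hz : z ∈ tsupport ψ
        · rw [Set.indicator_of_mem hz, ← ENNReal.tsum_mul_left]
          refine ENNReal.tsum_le_tsum fun j => ?_
          rw [enorm_mul, mul_right_comm, ← ofReal_norm (ψ z)]
          exact mul_le_mul' (h j z) (ENNReal.ofReal_le_ofReal (hB z))
        · simp only [image_eq_zero_of_notMem_tsupport hz, mul_zero, enorm_zero, tsum_zero, zero_le]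
    _ = C * ENNReal.ofReal B * ∫⁻ z in tsupport ψ, ∑' j, a j z := by
        rw [lintegral_indicator (isClosed_tsupport ψ).measurableSet,
          lintegral_const_mul' _ _ hCB.ne]
    _ < ∞ := ENNReal.mul_lt_top hCB (setLIntegral_lt_top_of_isCompact ha hψc)

lemma isWeakDeriv_tsumDeriv (hF : ∀ j, ContDiff ℝ (⊤ : ℕ∞) (F j)) (hC : C < ∞) (hC' : C' < ∞)
    (ha : ∀ x, ∃ U ∈ nhds x, ∫⁻ z in U, ∑' j, a j z < ∞) (α : Fin N → ℕ)
    (h : ∀ j z, ‖F j z‖ₑ ≤ C * a j z)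
    (h' : ∀ j z, ‖iterPD (multiIdxList α).reverse (F j) z‖ₑ ≤ C' * a j z) :
    IsWeakDeriv α (tsumDeriv F 0) (tsumDeriv F α) := by
  intro ψ hψ hψc
  rw [tsumDeriv_zero]
  simp only [tsumDeriv, multiDeriv]
  rw [integral_tsum_mul (fun j => (hF j).continuous) hC ha h
    (contDiff_iterPD _ hψ).continuous (hasCompactSupport_iterPD _ hψc),
    integral_tsum_mul (fun j => (contDiff_iterPD _ (hF j)).continuous) hC' ha h'
      hψ.continuous hψc, ← tsum_mul_left]
  refine tsum_congr fun j => ?_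
  rw [integral_mul_iterPD _ (hF j) hψ hψc, length_multiIdxList]

lemma lintegral_weightMeasure {w : Rn N → ℝ} (hw : Measurable w) {G : Rn N → ℝ≥0∞}
    (hG : Measurable G) :
    ∫⁻ z, G z ∂(weightMeasure w) = ∫⁻ z, ENNReal.ofReal (w z) * G z :=
  lintegral_withDensity_eq_lintegral_mul _ hw.ennreal_ofReal hG

lemma eLpNorm_weight_mul_le {γ : Rn N → ℝ} (hγ : IsWeight γ) {p : ℝ≥0∞} (hp0 : p ≠ 0)
    (hp : p ≠ ∞) {f : Rn N → ℝ} {G : Rn N → ℝ≥0∞} (hG : Measurable G)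
    (h : ∀ z, ‖f z‖ₑ ≤ C * G z) :
    eLpNorm (fun x => γ x * f x) p volume ≤
      C * (∫⁻ z, G z ^ p.toReal ∂(weightMeasure fun x => γ x ^ p.toReal)) ^ (1 / p.toReal) := by
  have hpr : 0 < p.toReal := ENNReal.toReal_pos hp0 hp
  have hCp : C = (C ^ p.toReal) ^ (1 / p.toReal) := by
    rw [← ENNReal.rpow_mul, mul_one_div_cancel hpr.ne', ENNReal.rpow_one]
  have hw : Measurable fun x => γ x ^ p.toReal := hγ.1.pow_const _
  rw [eLpNorm_eq_lintegral_rpow_enorm_toReal hp0 hp, hCp,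
    ← ENNReal.mul_rpow_of_nonneg _ _ (by positivity),
    lintegral_weightMeasure hw (hG.pow_const _),
    ← lintegral_const_mul _ (f := fun z => ENNReal.ofReal (γ z ^ p.toReal) * G z ^ p.toReal)
      (hw.ennreal_ofReal.mul (hG.pow_const _))]
  gcongr with z
  rw [enorm_mul, ENNReal.mul_rpow_of_nonneg _ _ hpr.le, mul_left_comm,
    Real.enorm_eq_ofReal (hγ.2 z).le, ENNReal.ofReal_rpow_of_pos (hγ.2 z),
    ← ENNReal.mul_rpow_of_nonneg _ _ hpr.le]
  gcongr
  exact h z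

lemma finite_setOf_sum_le (N l : ℕ) : {α : Fin N → ℕ | ∑ i, α i ≤ l}.Finite :=
  (Set.finite_Iic fun _ : Fin N => l).subset fun α (hα : _ ≤ l) i =>
    (Finset.single_le_sum (fun i _ => Nat.zero_le (α i)) (Finset.mem_univ i)).trans hα

lemma exists_memW_tsumDeriv {l : ℕ} {γ : Rn N → ℝ} (hγ : IsWeight γ) {p : ℝ≥0∞} (hp0 : p ≠ 0)
    (hp : p ≠ ∞) {C : List (Fin N) → ℝ≥0∞} (hC : ∀ L, C L < ∞) :
    ∃ C' < ∞, ∀ (F : ℕ → Rn N → ℝ) (a : ℕ → Rn N → ℝ≥0∞),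
      (∀ j, ContDiff ℝ (⊤ : ℕ∞) (F j)) → Measurable (fun z => ∑' j, a j z) →
      (∀ x, ∃ U ∈ nhds x, ∫⁻ z in U, ∑' j, a j z < ∞) →
      (∀ L : List (Fin N), L.length ≤ l → ∀ j z, ‖iterPD L (F j) z‖ₑ ≤ C L * a j z) →
      (∫⁻ z, (∑' j, a j z) ^ p.toReal ∂(weightMeasure fun x => γ x ^ p.toReal)) ^
        (1 / p.toReal) < ∞ →
      MemW N p l γ (tsumDeriv F 0) (tsumDeriv F) ∧ sobNorm N p l γ (tsumDeriv F) ≤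
        C' * (∫⁻ z, (∑' j, a j z) ^ p.toReal ∂(weightMeasure fun x => γ x ^ p.toReal)) ^
          (1 / p.toReal) := by
  set C' : ℝ≥0∞ := ∑' α : Fin N → ℕ, if ∑ i, α i ≤ l then C (multiIdxList α).reverse else 0
  have hC' : C' < ∞ := by
    rw [show C' = ∑ α ∈ (finite_setOf_sum_le N l).toFinset, _ from
      tsum_eq_sum fun α hα => if_neg (mt (finite_setOf_sum_le N l).mem_toFinset.2 hα)]
    refine ENNReal.sum_lt_top.2 fun α _ => ?_
    split_ifs
    exacts [hC _, ENNReal.zero_lt_top]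
  refine ⟨C', hC', fun F a hF ham ha hFa hfin => ?_⟩
  have hbound : ∀ α : Fin N → ℕ, ∑ i, α i ≤ l → ∀ j z,
      ‖iterPD (multiIdxList α).reverse (F j) z‖ₑ ≤ C (multiIdxList α).reverse * a j z :=
    fun α hα => hFa _ (by rwa [List.length_reverse, length_multiIdxList])
  have hloc : ∀ α : Fin N → ℕ, ∑ i, α i ≤ l → LocallyIntegrable (tsumDeriv F α) :=
    fun α hα => locallyIntegrable_tsumDeriv hF (hC _) ha α (hbound α hα)
  have hnorm : sobNorm N p l γ (tsumDeriv F) ≤ C' *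
      (∫⁻ z, (∑' j, a j z) ^ p.toReal ∂(weightMeasure fun x => γ x ^ p.toReal)) ^
        (1 / p.toReal) := by
    rw [← ENNReal.tsum_mul_right]
    refine ENNReal.tsum_le_tsum fun α => ?_
    split_ifs with hα
    · exact eLpNorm_weight_mul_le hγ hp0 hp ham (enorm_tsumDeriv_le α (hbound α hα))
    · exact zero_le
  exact ⟨⟨hloc 0 (Finset.sum_const_zero.trans_le l.zero_le), rfl, fun α hα => ⟨hloc α hα,
    isWeakDeriv_tsumDeriv hF (hC []) (hC _) ha α (hFa [] l.zero_le) (hbound α hα)⟩,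
    hnorm.trans_lt (ENNReal.mul_lt_top hC' hfin)⟩, hnorm⟩

end Series

/-! ### Convolution with compactly supported kernels -/

section Convolution

open Metric

variable {G : Type*} [NormedAddCommGroup G] [MeasurableSpace G] [BorelSpace G] {μ : Measure G}
  {κ φ ρ : G → ℝ} {ε : ℝ}

lemma enorm_convolution_le [μ.IsAddLeftInvariant] [μ.IsNegInvariant]
    (hκ : ∀ u, ε < ‖u‖ → κ u = 0) {B : NNReal} (hB : ∀ u, ‖κ u‖ₑ ≤ B) (x : G) :
    ‖(κ ⋆[ContinuousLinearMap.lsmul ℝ ℝ, μ] ρ) x‖ₑ ≤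
      B * ∫⁻ t in closedBall x ε, ‖ρ t‖ₑ ∂μ := by
  rw [convolution_lsmul_swap, ← lintegral_const_mul' _ _ coe_ne_top,
    ← lintegral_indicator measurableSet_closedBall]
  refine (enorm_integral_le_lintegral_enorm _).trans (lintegral_mono fun t => ?_)
  rw [smul_eq_mul, enorm_mul]
  by_cases ht : t ∈ closedBall x ε
  · rw [Set.indicator_of_mem ht]
    gcongr
    exact hB _
  · rw [mem_closedBall, dist_comm, dist_eq_norm, not_le] at ht
    rw [hκ _ ht, enorm_zero, zero_mul]
    exact zero_le

lemma setLIntegral_ball_comp_sub_le [μ.IsAddLeftInvariant] (f : G → ℝ≥0∞) (x : G)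
    (R : ℝ) {u : G} (hu : ‖u‖ ≤ ε) :
    ∫⁻ t in ball x R, f (t - u) ∂μ ≤ ∫⁻ t in ball x (R + ε), f t ∂μ := by
  rw [← lintegral_indicator measurableSet_ball, ← lintegral_indicator measurableSet_ball,
    ← lintegral_sub_right_eq_self ((ball x (R + ε)).indicator f) u]
  refine lintegral_mono fun t => ?_
  by_cases ht : t ∈ ball x R
  · have htu : t - u ∈ ball x (R + ε) := by
      rw [mem_ball_iff_norm] at ht ⊢
      calc ‖t - u - x‖ = ‖t - x - u‖ := by rw [sub_right_comm]
        _ ≤ ‖t - x‖ + ‖u‖ := norm_sub_le _ _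
        _ < R + ε := add_lt_add_of_lt_of_le ht hu
    rw [Set.indicator_of_mem ht, Set.indicator_of_mem htu]
  · rw [Set.indicator_of_notMem ht]
    exact zero_le

lemma setLIntegral_enorm_convolution_le [SecondCountableTopology G] [SFinite μ]
    [μ.IsAddLeftInvariant] (hκ : ∀ u, ε < ‖u‖ → κ u = 0) (hκm : Measurable κ)
    (hρ : Measurable ρ) (x : G) (R : ℝ) :
    ∫⁻ t in ball x R, ‖(κ ⋆[ContinuousLinearMap.lsmul ℝ ℝ, μ] ρ) t‖ₑ ∂μ ≤
      (∫⁻ u, ‖κ u‖ₑ ∂μ) * ∫⁻ t in ball x (R + ε), ‖ρ t‖ₑ ∂μ := by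
  calc ∫⁻ t in ball x R, ‖(κ ⋆[ContinuousLinearMap.lsmul ℝ ℝ, μ] ρ) t‖ₑ ∂μ
      ≤ ∫⁻ t in ball x R, (∫⁻ u, ‖κ u‖ₑ * ‖ρ (t - u)‖ₑ ∂μ) ∂μ := by
        refine lintegral_mono fun t => (enorm_integral_le_lintegral_enorm _).trans_eq ?_
        simp only [ContinuousLinearMap.lsmul_apply, smul_eq_mul, enorm_mul]
    _ = ∫⁻ u, (∫⁻ t in ball x R, ‖κ u‖ₑ * ‖ρ (t - u)‖ₑ ∂μ) ∂μ := by
        rw [lintegral_lintegral_swap]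
        exact Measurable.aemeasurable (by fun_prop)
    _ ≤ ∫⁻ u, ‖κ u‖ₑ * (∫⁻ t in ball x (R + ε), ‖ρ t‖ₑ ∂μ) ∂μ := by
        refine lintegral_mono fun u => ?_
        rw [lintegral_const_mul' _ _ enorm_ne_top]
        rcases lt_or_ge ε ‖u‖ with hu | hu
        · simp only [hκ u hu, enorm_zero, zero_mul, le_refl]
        · gcongr ‖κ u‖ₑ * ?_
          exact setLIntegral_ball_comp_sub_le (fun t => ‖ρ t‖ₑ) x R hu
    _ = _ := lintegral_mul_const _ hκm.enorm

lemma setLIntegral_enorm_convolution_sub_le [SecondCountableTopology G] [SFinite μ]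
    (hκ : Integrable κ μ) (hκm : Measurable κ) (h1 : ∫ u, κ u ∂μ = 1) (hφ : Measurable φ)
    (hex : ConvolutionExists κ φ (ContinuousLinearMap.lsmul ℝ ℝ) μ) (S : Set G) :
    ∫⁻ x in S, ‖(κ ⋆[ContinuousLinearMap.lsmul ℝ ℝ, μ] φ) x - φ x‖ₑ ∂μ ≤
      ∫⁻ u, ‖κ u‖ₑ * (∫⁻ x in S, ‖φ (x - u) - φ x‖ₑ ∂μ) ∂μ := by
  have heq : ∀ x, (κ ⋆[ContinuousLinearMap.lsmul ℝ ℝ, μ] φ) x - φ x =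
      ∫ u, κ u * (φ (x - u) - φ x) ∂μ := fun x => by
    have hx : ∫ u, κ u * φ x ∂μ = φ x := by rw [integral_mul_const, h1, one_mul]
    simp_rw [mul_sub]
    rw [integral_sub (f := fun u => κ u * φ (x - u)) (hex x) (hκ.mul_const _), hx]
    rfl
  calc ∫⁻ x in S, ‖(κ ⋆[ContinuousLinearMap.lsmul ℝ ℝ, μ] φ) x - φ x‖ₑ ∂μ
      ≤ ∫⁻ x in S, (∫⁻ u, ‖κ u‖ₑ * ‖φ (x - u) - φ x‖ₑ ∂μ) ∂μ := by
        refine lintegral_mono fun x => ?_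
        rw [heq]
        refine (enorm_integral_le_lintegral_enorm _).trans_eq ?_
        simp only [enorm_mul]
    _ = ∫⁻ u, (∫⁻ x in S, ‖κ u‖ₑ * ‖φ (x - u) - φ x‖ₑ ∂μ) ∂μ := by
        rw [lintegral_lintegral_swap]
        exact Measurable.aemeasurable (by fun_prop)
    _ = _ := lintegral_congr fun u => lintegral_const_mul' _ _ enorm_ne_top

lemma tendsto_lintegral_enorm_translate_sub [μ.IsAddLeftInvariant] [IsLocallyFiniteMeasure μ]
    [μ.InnerRegularCompactLTTop] {f : G → ℝ} (hf : Integrable f μ) :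
    Tendsto (fun h => ∫⁻ x, ‖f (h + x) - f x‖ₑ ∂μ) (nhds 0) (nhds 0) := by
  have : Fact ((1 : ℝ≥0∞) ≠ ∞) := ⟨one_ne_top⟩
  have hf1 : MemLp f 1 μ := memLp_one_iff_integrable.2 hf
  have hcont : Tendsto (fun h : G => DomAddAct.mk h +ᵥ hf1.toLp f) (nhds 0)
      (nhds (DomAddAct.mk (0 : G) +ᵥ hf1.toLp f)) :=
    ((DomAddAct.continuous_mk.vadd continuous_const).tendsto 0)
  rw [DomAddAct.mk_zero, zero_vadd, tendsto_iff_edist_tendsto_0] at hcont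
  refine hcont.congr fun h => ?_
  rw [DomAddAct.mk_vadd_toLp, Lp.edist_toLp_toLp, eLpNorm_one_eq_lintegral_enorm]
  rfl

lemma tendsto_setLIntegral_enorm_translate_sub [ProperSpace G] [μ.IsAddLeftInvariant]
    [IsLocallyFiniteMeasure μ] [μ.InnerRegularCompactLTTop] (hφ : LocallyIntegrable φ μ) (R : ℝ) :
    Tendsto (fun h => ∫⁻ x in ball 0 R, ‖φ (h + x) - φ x‖ₑ ∂μ) (nhds 0) (nhds 0) := by
  have hf : Integrable ((closedBall (0 : G) (R + 1)).indicator φ) μ :=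
    (integrable_indicator_iff measurableSet_closedBall).2
      (hφ.integrableOn_isCompact (isCompact_closedBall 0 (R + 1)))
  refine tendsto_of_tendsto_of_tendsto_of_le_of_le' tendsto_const_nhds
    (tendsto_lintegral_enorm_translate_sub hf) (Eventually.of_forall fun _ => zero_le) ?_
  filter_upwards [ball_mem_nhds (0 : G) one_pos] with h hh
  refine le_trans (setLIntegral_mono' measurableSet_ball fun x hx => ?_)
    (setLIntegral_le_lintegral (ball 0 R) _)
  rw [mem_ball_zero_iff] at hh hx
  rw [Set.indicator_of_mem, Set.indicator_of_mem] <;> rw [mem_closedBall_zero_iff]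
  · linarith
  · linarith [norm_add_le h x]

end Convolution

/-! ### Smooth kernels and their dilations -/

section Kernels

open Metric

variable {n : ℕ} {κ κ' φ ρ : Rn n → ℝ} {ε ε' t : ℝ}

/-- The `L_1`-normalized dilation `κ_t(u) = tⁿ κ(t u)` of a kernel, which concentrates at the origin
as `t → ∞`. -/
def dilate (t : ℝ) (κ : Rn n → ℝ) : Rn n → ℝ := fun u => t ^ n * κ (t • u)

/-- Smooth kernels vanishing off the closed ball of radius `ε`. -/
structure IsSmoothKernel (ε : ℝ) (κ : Rn n → ℝ) : Prop where
  contDiff : ContDiff ℝ (⊤ : ℕ∞) κ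
  eq_zero : ∀ u, ε < ‖u‖ → κ u = 0

namespace IsSmoothKernel

protected lemma continuous (hκ : IsSmoothKernel ε κ) : Continuous κ := hκ.contDiff.continuous

protected lemma hasCompactSupport (hκ : IsSmoothKernel ε κ) : HasCompactSupport κ :=
  HasCompactSupport.intro (isCompact_closedBall 0 ε) fun u hu =>
    hκ.eq_zero u (by rwa [mem_closedBall_zero_iff, not_le] at hu)

protected lemma integrable (hκ : IsSmoothKernel ε κ) : Integrable κ :=
  hκ.continuous.integrable_of_hasCompactSupport hκ.hasCompactSupport

protected lemma mono (hκ : IsSmoothKernel ε κ) (h : ε ≤ ε') : IsSmoothKernel ε' κ :=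
  ⟨hκ.contDiff, fun u hu => hκ.eq_zero u (h.trans_lt hu)⟩

protected lemma const_mul (hκ : IsSmoothKernel ε κ) (a : ℝ) : IsSmoothKernel ε fun u => a * κ u :=
  ⟨contDiff_const.mul hκ.contDiff, fun u hu => by rw [hκ.eq_zero u hu, mul_zero]⟩

protected lemma sum {ι : Type*} {s : Finset ι} {κ : ι → Rn n → ℝ}
    (hκ : ∀ i ∈ s, IsSmoothKernel ε (κ i)) : IsSmoothKernel ε fun u => ∑ i ∈ s, κ i u :=
  ⟨ContDiff.sum fun i hi => (hκ i hi).contDiff,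
    fun u hu => Finset.sum_eq_zero fun i hi => (hκ i hi).eq_zero u hu⟩

protected lemma iterPD (hκ : IsSmoothKernel ε κ) (L : List (Fin n)) :
    IsSmoothKernel ε (iterPD L κ) := by
  refine ⟨contDiff_iterPD L hκ.contDiff, fun u hu => ?_⟩
  have hsupp : tsupport κ ⊆ closedBall 0 ε :=
    closure_minimal (fun v hv => by
      rw [mem_closedBall_zero_iff]
      exact le_of_not_gt fun h => hv (hκ.eq_zero v h)) isClosed_closedBall
  refine image_eq_zero_of_notMem_tsupport fun hmem => hu.not_ge ?_
  exact mem_closedBall_zero_iff.1 (hsupp (tsupport_iterPD_subset L κ hmem))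

protected lemma dilate (hκ : IsSmoothKernel ε κ) (ht : 0 < t) :
    IsSmoothKernel (ε / t) (dilate t κ) := by
  refine ⟨contDiff_const.mul (hκ.contDiff.comp (contDiff_const_smul t)), fun u hu => ?_⟩
  have htu : ε < ‖t • u‖ := by
    rwa [norm_smul, Real.norm_of_nonneg ht.le, ← div_lt_iff₀' ht]
  rw [dilate, hκ.eq_zero _ htu, mul_zero]

lemma convolutionExists (hκ : IsSmoothKernel ε κ) (hφ : LocallyIntegrable φ) :
    ConvolutionExists κ φ (ContinuousLinearMap.lsmul ℝ ℝ) volume :=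
  hκ.hasCompactSupport.convolutionExists_left _ hκ.continuous hφ

lemma contDiff_convolution (hκ : IsSmoothKernel ε κ) (hφ : LocallyIntegrable φ) :
    ContDiff ℝ (⊤ : ℕ∞) (κ ⋆ φ) :=
  hκ.hasCompactSupport.contDiff_convolution_left _ hκ.contDiff hφ

lemma convolution_sub (hκ : IsSmoothKernel ε κ) (hφ : LocallyIntegrable φ)
    (hρ : LocallyIntegrable ρ) : κ ⋆ (φ - ρ) = κ ⋆ φ - κ ⋆ ρ := by
  funext x
  simp only [convolution_def, Pi.sub_apply, map_sub]
  exact integral_sub (hκ.convolutionExists hφ x) (hκ.convolutionExists hρ x)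

protected lemma convolution_assoc (hκ : IsSmoothKernel ε κ) (hκ' : IsSmoothKernel ε' κ')
    (hφ : LocallyIntegrable φ) : (κ ⋆ κ') ⋆ φ = κ ⋆ (κ' ⋆ φ) := by
  funext x
  have hφn : LocallyIntegrable fun x => ‖φ x‖ := fun x => (hφ x).norm
  refine MeasureTheory.convolution_assoc _ _ _ _ (fun a b c => by simp [mul_assoc])
    hκ.continuous.aestronglyMeasurable hκ'.continuous.aestronglyMeasurable
    hφ.aestronglyMeasurable ?_ ?_ ?_
  · exact ae_of_all _ (hκ.convolutionExists hκ'.continuous.locallyIntegrable)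
  · exact ae_of_all _
      (hκ'.hasCompactSupport.norm.convolutionExists_left _ hκ'.continuous.norm hφn)
  · exact hκ.hasCompactSupport.norm.convolutionExists_left _ hκ.continuous.norm
      (hκ'.hasCompactSupport.norm.continuous_convolution_left _ hκ'.continuous.norm
        hφn).locallyIntegrable x

lemma convolution_left_comm (hκ : IsSmoothKernel ε κ) (hκ' : IsSmoothKernel ε' κ')
    (hφ : LocallyIntegrable φ) : κ ⋆ (κ' ⋆ φ) = κ' ⋆ (κ ⋆ φ) := by
  have hcomm : κ ⋆ κ' = κ' ⋆ κ := by
    funext x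
    rw [convolution_lsmul_swap, convolution_def]
    simp only [ContinuousLinearMap.lsmul_apply, smul_eq_mul, mul_comm]
  rw [← hκ.convolution_assoc hκ' hφ, ← hκ'.convolution_assoc hκ hφ, hcomm]

lemma exists_enorm_le (hκ : IsSmoothKernel ε κ) : ∃ B : NNReal, ∀ u, ‖κ u‖ₑ ≤ B := by
  obtain ⟨B, hB⟩ := hκ.continuous.bounded_above_of_compact_support hκ.hasCompactSupport
  refine ⟨B.toNNReal, fun u => ?_⟩
  rw [← ofReal_norm]
  exact ENNReal.ofReal_le_ofReal (hB u)

lemma exists_iterPD_dilate_convolution_le (hκ : IsSmoothKernel ε κ) (L : List (Fin n)) :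
    ∃ B : NNReal, ∀ t > 0, ∀ ρ : Rn n → ℝ, LocallyIntegrable ρ → ∀ x,
      ‖iterPD L (dilate t κ ⋆ ρ) x‖ₑ ≤
        B * ENNReal.ofReal t ^ (L.length + n) * ∫⁻ y in closedBall x (ε / t), ‖ρ y‖ₑ := by
  obtain ⟨B, hB⟩ := (hκ.iterPD L).exists_enorm_le
  refine ⟨B, fun t ht ρ hρ x => ?_⟩
  have hκt := hκ.dilate ht
  have hL : iterPD L (dilate t κ) =
      fun u => t ^ (L.length + n) * iterPD L κ (t • u) := by
    have hcomp : ContDiff ℝ (⊤ : ℕ∞) fun u => κ (t • u) :=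
      hκ.contDiff.comp (contDiff_const_smul t)
    unfold dilate
    rw [iterPD_const_mul L hcomp, iterPD_comp_smul L hκ.contDiff]
    funext u
    ring
  rw [iterPD_convolution L hκt.contDiff hκt.hasCompactSupport hρ]
  have hbound : ∀ u, ‖iterPD L (dilate t κ) u‖ₑ ≤
      (B * t.toNNReal ^ (L.length + n) : NNReal) := fun u => by
    rw [hL, enorm_mul, enorm_pow, Real.enorm_of_nonneg ht.le, mul_comm, ENNReal.coe_mul,
      ENNReal.coe_pow]
    gcongr
    · exact hB _
    · exact le_rfl
  exact (enorm_convolution_le (hκt.iterPD L).eq_zero hbound x).trans_eq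
    (by rw [ENNReal.coe_mul, ENNReal.coe_pow]; rfl)

end IsSmoothKernel

lemma integral_dilate (κ : Rn n → ℝ) (ht : 0 < t) : ∫ u, dilate t κ u = ∫ u, κ u := by
  simp only [dilate]
  rw [integral_const_mul, Measure.integral_comp_smul, Module.finrank_fin_fun, smul_eq_mul,
    abs_of_pos (by positivity), mul_inv_cancel_left₀ (by positivity)]

lemma lintegral_enorm_dilate (κ : Rn n → ℝ) (ht : 0 < t) :
    ∫⁻ u, ‖dilate t κ u‖ₑ = ∫⁻ u, ‖κ u‖ₑ := by
  have hmap := lintegral_map_equiv (μ := (volume : Measure (Rn n))) (fun u => ‖κ u‖ₑ)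
    (MeasurableEquiv.smul₀ t ht.ne')
  simp only [MeasurableEquiv.coe_smul₀] at hmap
  simp only [dilate, enorm_mul]
  rw [lintegral_const_mul' _ _ enorm_ne_top, ← hmap, Measure.map_addHaar_smul _ ht.ne',
    lintegral_smul_measure, smul_eq_mul, ← mul_assoc, Module.finrank_fin_fun,
    Real.enorm_of_nonneg (by positivity), ← ENNReal.ofReal_mul (by positivity),
    abs_of_pos (by positivity), mul_inv_cancel₀ (by positivity), ofReal_one, one_mul]

lemma dilate_inv_convolution_apply (κ φ : Rn n → ℝ) (ht : 0 < t) (x : Rn n) :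
    (dilate t⁻¹ κ ⋆ φ) x = ∫ h, κ h * φ (x - t • h) := by
  have hsubst := Measure.integral_comp_smul (volume : Measure (Rn n))
    (fun u => κ (t⁻¹ • u) * φ (x - u)) t
  simp only [inv_smul_smul₀ ht.ne', Module.finrank_fin_fun, smul_eq_mul] at hsubst
  rw [hsubst, convolution_def, ← integral_const_mul, abs_of_pos (by positivity)]
  simp only [dilate, ContinuousLinearMap.lsmul_apply, smul_eq_mul, inv_pow, mul_assoc]

lemma IsSmoothKernel.integrable_mul_comp_sub_smul (hκ : IsSmoothKernel ε κ)
    (hφ : LocallyIntegrable φ) (ht : 0 < t) (x : Rn n) :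
    Integrable fun h => κ h * φ (x - t • h) := by
  have hint := ((hκ.dilate (inv_pos.2 ht)).convolutionExists hφ x).comp_smul ht.ne'
  refine (hint.const_mul (t ^ n)).congr (ae_of_all _ fun h => ?_)
  simp only [dilate, ContinuousLinearMap.lsmul_apply, smul_eq_mul, inv_smul_smul₀ ht.ne', inv_pow,
    mul_assoc, mul_inv_cancel_left₀ (pow_pos ht n).ne']

lemma IsSmoothKernel.tendsto_dilate_convolution (hκ : IsSmoothKernel ε κ) (h1 : ∫ u, κ u = 1)
    (hφ : Measurable φ) (hφi : LocallyIntegrable φ) (R : ℝ) :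
    Tendsto (fun t => ∫⁻ x in ball 0 R, ‖(dilate t κ ⋆ φ) x - φ x‖ₑ) atTop (nhds 0) := by
  have hfin : ∫⁻ u, ‖κ u‖ₑ ≠ ∞ := hκ.integrable.2.ne
  refine ENNReal.tendsto_nhds_zero.2 fun δ hδ => ?_
  obtain ⟨η, hη, hηδ⟩ : ∃ η : ℝ≥0∞, 0 < η ∧ (∫⁻ u, ‖κ u‖ₑ) * η ≤ δ :=
    ⟨δ / ∫⁻ u, ‖κ u‖ₑ, ENNReal.div_pos hδ.ne' hfin, ENNReal.mul_div_le⟩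
  have hsmall := (ENNReal.tendsto_nhds_zero.1
    (tendsto_setLIntegral_enorm_translate_sub hφi R) η hη)
  obtain ⟨s, hs, hsη⟩ := Metric.eventually_nhds_iff.1 hsmall
  filter_upwards [eventually_gt_atTop 0, eventually_gt_atTop (ε / s)] with t ht hts
  have hκt := hκ.dilate ht
  refine (setLIntegral_enorm_convolution_sub_le hκt.integrable hκt.continuous.measurable
    ((integral_dilate κ ht).trans h1) hφ (hκt.convolutionExists hφi) _).trans ?_
  calc ∫⁻ u, ‖dilate t κ u‖ₑ * ∫⁻ x in ball 0 R, ‖φ (x - u) - φ x‖ₑ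
      ≤ ∫⁻ u, ‖dilate t κ u‖ₑ * η := lintegral_mono fun u => by
        rcases lt_or_ge (ε / t) ‖u‖ with hu | hu
        · simp only [hκt.eq_zero u hu, enorm_zero, zero_mul, le_refl]
        · gcongr ‖dilate t κ u‖ₑ * ?_
          have hus : dist (-u) 0 < s := by
            rw [dist_zero_right, norm_neg]
            exact hu.trans_lt (by rwa [div_lt_comm₀ ht hs])
          simpa only [neg_add_eq_sub] using hsη hus
    _ = (∫⁻ u, ‖κ u‖ₑ) * η := by
        rw [lintegral_mul_const _ hκt.continuous.measurable.enorm, lintegral_enorm_dilate κ ht]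
    _ ≤ δ := hηδ

end Kernels

/-! ### Mollifiers of order `l` -/

section Mollifiers

open Metric

variable {n : ℕ} {φ : Rn n → ℝ} {t : ℝ}

/-- A nonnegative smooth kernel of integral one, supported so close to the origin that its dilations
by `1, …, l` all live in the ball of radius `1 / 8`. -/
def bumpKernel (n l : ℕ) : Rn n → ℝ :=
  (⟨1 / (16 * ((l : ℝ) + 1)), 1 / (8 * ((l : ℝ) + 1)), by positivity, by
    gcongr; norm_num⟩ : ContDiffBump (0 : Rn n)).normed volume

lemma isSmoothKernel_bumpKernel (n l : ℕ) :
    IsSmoothKernel (1 / (8 * ((l : ℝ) + 1))) (bumpKernel n l) := by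
  refine ⟨ContDiffBump.contDiff_normed _, fun u hu => ?_⟩
  rw [← Function.notMem_support, bumpKernel, ContDiffBump.support_normed_eq, mem_ball_zero_iff]
  exact hu.not_gt

lemma integral_bumpKernel (n l : ℕ) : ∫ u, bumpKernel n l u = 1 :=
  ContDiffBump.integral_normed _

/-- The mollifying kernel of order `l`: the remainder of the associated mollification is an average
of `l`-th differences. -/
def mollKernel (n l : ℕ) : Rn n → ℝ := fun u =>
  ∑ i ∈ Finset.range l,
    (-1) ^ i * (l.choose (i + 1) : ℝ) * dilate ((i + 1 : ℕ) : ℝ)⁻¹ (bumpKernel n l) u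

lemma isSmoothKernel_mollKernel (n l : ℕ) : IsSmoothKernel (1 / 8) (mollKernel n l) := by
  refine IsSmoothKernel.sum fun i hi => IsSmoothKernel.const_mul ?_ _
  have hil : ((i + 1 : ℕ) : ℝ) ≤ (l : ℝ) + 1 := by
    exact_mod_cast Nat.succ_le_succ (Finset.mem_range.1 hi).le
  refine ((isSmoothKernel_bumpKernel n l).dilate (by positivity)).mono ?_
  rw [div_inv_eq_mul, div_mul_eq_mul_div, one_mul, div_le_div_iff₀ (by positivity) (by norm_num)]
  linarith

lemma integral_mollKernel {l : ℕ} (hl : 0 < l) : ∫ u, mollKernel n l u = 1 := by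
  have hpos (i : ℕ) : (0 : ℝ) < ((i + 1 : ℕ) : ℝ)⁻¹ := by positivity
  have halt : ∑ i ∈ Finset.range (l + 1), (-1 : ℝ) ^ i * l.choose i = 0 := by
    exact_mod_cast Int.alternating_sum_range_choose_of_ne hl.ne'
  unfold mollKernel
  rw [integral_finsetSum _ fun i _ =>
    (((isSmoothKernel_bumpKernel n l).dilate (hpos i)).integrable).const_mul _]
  simp only [integral_const_mul, integral_dilate _ (hpos _), integral_bumpKernel, mul_one]
  rw [Finset.sum_range_succ'] at halt
  simp only [pow_succ, mul_neg, mul_one, neg_mul, Finset.sum_neg_distrib, pow_zero,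
    Nat.choose_zero_right, Nat.cast_one] at halt
  linarith

/-- The mollification of order `l` of `φ` at scale `1 / t`. -/
def mollify (l : ℕ) (t : ℝ) (φ : Rn n → ℝ) : Rn n → ℝ := dilate t (mollKernel n l) ⋆ φ

lemma contDiff_mollify (l : ℕ) (ht : 0 < t) (hφ : LocallyIntegrable φ) :
    ContDiff ℝ (⊤ : ℕ∞) (mollify l t φ) :=
  ((isSmoothKernel_mollKernel n l).dilate ht).contDiff_convolution hφ

lemma locallyIntegrable_mollify (l : ℕ) (ht : 0 < t) (hφ : LocallyIntegrable φ) :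
    LocallyIntegrable (mollify l t φ) :=
  (contDiff_mollify l ht hφ).continuous.locallyIntegrable

lemma mollify_eq_sum (l : ℕ) (ht : 0 < t) (hφ : LocallyIntegrable φ) (x : Rn n) :
    mollify l t φ x = ∑ i ∈ Finset.range l, (-1) ^ i * (l.choose (i + 1) : ℝ) *
      ∫ h, dilate t (bumpKernel n l) h * φ (x - ((i + 1 : ℕ) : ℝ) • h) := by
  have hk := (isSmoothKernel_bumpKernel n l).dilate ht
  have hpos (i : ℕ) : (0 : ℝ) < ((i + 1 : ℕ) : ℝ) := by positivity
  have hdil : dilate t (mollKernel n l) = fun u => ∑ i ∈ Finset.range l,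
      (-1) ^ i * (l.choose (i + 1) : ℝ) *
        dilate ((i + 1 : ℕ) : ℝ)⁻¹ (dilate t (bumpKernel n l)) u := by
    funext u
    simp only [dilate, mollKernel, Finset.mul_sum]
    refine Finset.sum_congr rfl fun i _ => ?_
    rw [smul_comm]
    ring
  rw [mollify, hdil, convolution_def]
  simp only [ContinuousLinearMap.lsmul_apply, smul_eq_mul, Finset.sum_mul, mul_assoc]
  rw [integral_finsetSum]
  · refine Finset.sum_congr rfl fun i _ => ?_
    rw [integral_const_mul, integral_const_mul, ← dilate_inv_convolution_apply _ _ (hpos i)]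
    rfl
  · exact fun i _ =>
      (((hk.dilate (inv_pos.2 (hpos i))).convolutionExists hφ x).const_mul _).const_mul _

lemma mollify_sub_eq_integral (l : ℕ) (ht : 0 < t) (hφ : LocallyIntegrable φ) (x : Rn n) :
    mollify l t φ x - φ x =
      -(-1) ^ l * ∫ h, dilate t (bumpKernel n l) h * diffl l (-h) φ x := by
  have hk := (isSmoothKernel_bumpKernel n l).dilate ht
  have hpos (i : ℕ) : (0 : ℝ) < ((i + 1 : ℕ) : ℝ) := by positivity
  have hmul (h : Rn n) : -(-1) ^ l * (dilate t (bumpKernel n l) h * diffl l (-h) φ x) =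
      (∑ i ∈ Finset.range l, (-1) ^ i * (l.choose (i + 1) : ℝ) *
        (dilate t (bumpKernel n l) h * φ (x - ((i + 1 : ℕ) : ℝ) • h))) -
        dilate t (bumpKernel n l) h * φ x := by
    have hsq : ((-1 : ℝ) ^ l) * (-1) ^ l = 1 := by rw [← mul_pow]; norm_num
    unfold diffl
    rw [Finset.sum_range_succ', mul_add, mul_add, Finset.mul_sum, Finset.mul_sum, sub_eq_add_neg]
    congr 1
    · refine Finset.sum_congr rfl fun i _ => ?_
      rw [smul_neg, ← sub_eq_add_neg, pow_add, pow_succ]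
      linear_combination (l.choose (i + 1) * (-1) ^ i * (dilate t (bumpKernel n l) h *
        φ (x - ((i + 1 : ℕ) : ℝ) • h))) * hsq
    · simp only [Nat.choose_zero_right, Nat.cast_one, add_zero, Nat.cast_zero, zero_smul]
      linear_combination (-(dilate t (bumpKernel n l) h * φ x)) * hsq
  have hint (i : ℕ) := (hk.integrable_mul_comp_sub_smul hφ (hpos i) x).const_mul
    ((-1) ^ i * (l.choose (i + 1) : ℝ))
  rw [← integral_const_mul]
  simp_rw [hmul]
  rw [integral_sub (integrable_finsetSum _ fun i _ => hint i) (hk.integrable.mul_const _),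
    integral_finsetSum _ fun i _ => hint i, integral_mul_const, integral_dilate _ ht,
    integral_bumpKernel, one_mul, mollify_eq_sum l ht hφ]
  simp only [integral_const_mul]

lemma exists_enorm_mollify_sub_le (n l : ℕ) : ∃ B : NNReal, ∀ t > 0, ∀ φ : Rn n → ℝ,
    LocallyIntegrable φ → ∀ x, ‖mollify l t φ x - φ x‖ₑ ≤
      B * ENNReal.ofReal t ^ n * ∫⁻ h in ball 0 (1 / t), ‖diffl l h φ x‖ₑ := by
  obtain ⟨B, hB⟩ := (isSmoothKernel_bumpKernel n l).exists_enorm_le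
  refine ⟨B, fun t ht φ hφ x => ?_⟩
  have hk := (isSmoothKernel_bumpKernel n l).dilate ht
  have hradius : 1 / (8 * ((l : ℝ) + 1)) / t < 1 / t := by
    gcongr
    rw [div_lt_one (by positivity)]
    linarith [(Nat.cast_nonneg l : (0 : ℝ) ≤ l)]
  have hsign : ‖-(-1 : ℝ) ^ l‖ₑ = 1 := by rw [enorm_neg, enorm_pow, enorm_neg, enorm_one, one_pow]
  rw [mollify_sub_eq_integral l ht hφ, enorm_mul, hsign, one_mul,
    ← lintegral_const_mul' _ _ (by finiteness), ← lintegral_indicator measurableSet_ball,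
    ← lintegral_neg_eq_self]
  refine (enorm_integral_le_lintegral_enorm _).trans (lintegral_mono fun h => ?_)
  by_cases hh : -h ∈ ball (0 : Rn n) (1 / t)
  · rw [Set.indicator_of_mem hh, enorm_mul, dilate, enorm_mul, enorm_pow,
      Real.enorm_of_nonneg ht.le, mul_comm (B : ℝ≥0∞)]
    gcongr
    exact hB _
  · rw [mem_ball_zero_iff, norm_neg, not_lt] at hh
    rw [hk.eq_zero h (hradius.trans_le hh), zero_mul, enorm_zero]
    exact zero_le

end Mollifiers

/-! ### Littlewood–Paley layers -/

section Layers

open Metric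

variable {n l : ℕ} {r : ℝ≥0∞} {φ : Rn n → ℝ}

lemma openCube_eq_ball (x : Rn n) {s : ℝ} (hs : 0 < s) : openCube x s = ball x s := by
  ext y
  rw [mem_ball_iff_norm, pi_norm_lt_iff hs]
  rfl

lemma ofReal_two_pow (j : ℕ) : ENNReal.ofReal (2 ^ j) = 2 ^ j := by
  rw [ENNReal.ofReal_pow zero_le_two, ENNReal.ofReal_ofNat]

/-- The smooth approximation of `φ` at scale `2⁻ʲ`. The mollification is applied twice so that both
the approximation and its increments are mollifications, which can then be differentiated. -/
def smoothApprox (l : ℕ) (φ : Rn n → ℝ) (j : ℕ) : Rn n → ℝ :=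
  mollify l (2 ^ j) (mollify l (2 ^ j) φ)

/-- The layers of the decomposition of `φ` into pieces of frequency `2ʲ`. -/
def layer (l : ℕ) (φ : Rn n → ℝ) : ℕ → Rn n → ℝ
  | 0 => smoothApprox l φ 0
  | j + 1 => smoothApprox l φ (j + 1) - smoothApprox l φ j

lemma contDiff_smoothApprox (l : ℕ) (hφ : LocallyIntegrable φ) (j : ℕ) :
    ContDiff ℝ (⊤ : ℕ∞) (smoothApprox l φ j) :=
  contDiff_mollify l (by positivity) (locallyIntegrable_mollify l (by positivity) hφ)

lemma contDiff_layer (l : ℕ) (hφ : LocallyIntegrable φ) (j : ℕ) :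
    ContDiff ℝ (⊤ : ℕ∞) (layer l φ j) := by
  cases j with
  | zero => exact contDiff_smoothApprox l hφ 0
  | succ j => exact (contDiff_smoothApprox l hφ _).sub (contDiff_smoothApprox l hφ _)

lemma sum_range_layer (l : ℕ) (φ : Rn n → ℝ) (k : ℕ) (x : Rn n) :
    ∑ j ∈ Finset.range (k + 1), layer l φ j x = smoothApprox l φ k x := by
  rw [Finset.sum_range_succ']
  exact (congrArg (· + _) (Finset.sum_range_sub (fun j => smoothApprox l φ j x) k)).trans
    (sub_add_cancel _ _)

lemma layer_succ (l : ℕ) (hφ : LocallyIntegrable φ) (j : ℕ) :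
    layer l φ (j + 1) =
      mollify l (2 ^ (j + 1)) (mollify l (2 ^ (j + 1)) φ - mollify l (2 ^ j) φ) +
        mollify l (2 ^ j) (mollify l (2 ^ (j + 1)) φ - mollify l (2 ^ j) φ) := by
  have hk (i : ℕ) := (isSmoothKernel_mollKernel n l).dilate (show (0 : ℝ) < 2 ^ i by positivity)
  have hφk (i : ℕ) : LocallyIntegrable (mollify l (2 ^ i) φ) :=
    locallyIntegrable_mollify l (by positivity) hφ
  have hsub (i : ℕ) : mollify l (2 ^ i) (mollify l (2 ^ (j + 1)) φ - mollify l (2 ^ j) φ) =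
      mollify l (2 ^ i) (mollify l (2 ^ (j + 1)) φ) - mollify l (2 ^ i) (mollify l (2 ^ j) φ) :=
    (hk i).convolution_sub (hφk _) (hφk _)
  have hcomm : mollify l (2 ^ (j + 1)) (mollify l (2 ^ j) φ) =
      mollify l (2 ^ j) (mollify l (2 ^ (j + 1)) φ) := (hk _).convolution_left_comm (hk _) hφ
  rw [hsub, hsub, hcomm, layer, smoothApprox, smoothApprox]
  abel

lemma setLIntegral_enorm_mollify_le (l : ℕ) {t : ℝ} (ht : 0 < t) (hφ : Measurable φ) (x : Rn n)
    (R : ℝ) :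
    ∫⁻ y in ball x R, ‖mollify l t φ y‖ₑ ≤
      (∫⁻ u, ‖mollKernel n l u‖ₑ) * ∫⁻ y in ball x (R + 1 / 8 / t), ‖φ y‖ₑ := by
  have hk := (isSmoothKernel_mollKernel n l).dilate ht
  rw [← lintegral_enorm_dilate _ ht]
  exact setLIntegral_enorm_convolution_le hk.eq_zero hk.continuous.measurable hφ x R

lemma tendsto_setLIntegral_enorm_smoothApprox_sub (hl : 0 < l) (hφm : Measurable φ)
    (hφ : LocallyIntegrable φ) (R : ℝ) :
    Tendsto (fun j => ∫⁻ x in ball 0 R, ‖smoothApprox l φ j x - φ x‖ₑ) atTop (nhds 0) := by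
  set K := ∫⁻ u, ‖mollKernel n l u‖ₑ
  set E : ℝ → ℕ → ℝ≥0∞ := fun R j => ∫⁻ x in ball 0 R, ‖mollify l (2 ^ j) φ x - φ x‖ₑ
  have hE (R : ℝ) : Tendsto (E R) atTop (nhds 0) :=
    ((isSmoothKernel_mollKernel n l).tendsto_dilate_convolution (integral_mollKernel hl) hφm hφ
      R).comp (tendsto_pow_atTop_atTop_of_one_lt one_lt_two)
  have hlim : Tendsto (fun j => K * E (R + 1) j + E R j) atTop (nhds 0) := by
    simpa using (ENNReal.Tendsto.const_mul (hE (R + 1))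
      (Or.inr (isSmoothKernel_mollKernel n l).integrable.2.ne)).add (hE R)
  refine tendsto_of_tendsto_of_tendsto_of_le_of_le tendsto_const_nhds hlim
    (fun _ => zero_le) fun j => ?_
  have ht : (0 : ℝ) < 2 ^ j := by positivity
  have hφj := locallyIntegrable_mollify l ht hφ
  have hφjm : Measurable (mollify l (2 ^ j) φ) := (contDiff_mollify l ht hφ).continuous.measurable
  have hsplit (x : Rn n) : smoothApprox l φ j x - φ x =
      mollify l (2 ^ j) (mollify l (2 ^ j) φ - φ) x + (mollify l (2 ^ j) φ x - φ x) := by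
    have hsub : mollify l (2 ^ j) (mollify l (2 ^ j) φ - φ) =
        smoothApprox l φ j - mollify l (2 ^ j) φ :=
      ((isSmoothKernel_mollKernel n l).dilate ht).convolution_sub hφj hφ
    rw [hsub, Pi.sub_apply, sub_add_sub_cancel]
  calc ∫⁻ x in ball 0 R, ‖smoothApprox l φ j x - φ x‖ₑ
      ≤ ∫⁻ x in ball 0 R, (‖mollify l (2 ^ j) (mollify l (2 ^ j) φ - φ) x‖ₑ +
          ‖mollify l (2 ^ j) φ x - φ x‖ₑ) :=
        lintegral_mono fun x => (congrArg enorm (hsplit x)).trans_le (enorm_add_le _ _)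
    _ = (∫⁻ x in ball 0 R, ‖mollify l (2 ^ j) (mollify l (2 ^ j) φ - φ) x‖ₑ) + E R j :=
        lintegral_add_right _ (hφjm.sub hφm).enorm
    _ ≤ K * E (R + 1) j + E R j := by
        gcongr ?_ + E R j
        refine (setLIntegral_enorm_mollify_le l ht (hφjm.sub hφm) 0 R).trans ?_
        gcongr K * ?_
        refine lintegral_mono_set (ball_subset_ball (add_le_add_right ?_ R))
        exact (div_le_self (by norm_num) (one_le_pow₀ one_le_two)).trans (by norm_num)

end Layers

/-! ### Local oscillations -/

section Oscillation

open Metric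

variable {n l : ℕ} {r : ℝ≥0∞} {φ : Rn n → ℝ}

lemma measurable_diffl (l : ℕ) (hφ : Measurable φ) :
    Measurable fun hx : Rn n × Rn n => diffl l hx.1 φ hx.2 := by
  unfold diffl
  fun_prop

/-- The local quantities entering the norm of `B̃^l_{p,p,r}`: the size of `φ` for `j = 0`, and for
`j ≥ 1` its `l`-th differences, on the cube of half-side `2⁻ʲ` around `x`. -/
def localOsc (l : ℕ) (r : ℝ≥0∞) (φ : Rn n → ℝ) : ℕ → Rn n → ℝ≥0∞
  | 0, x => eLpNorm φ r (volume.restrict (openCube x 1))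
  | j + 1, x =>
    deltaE n l r ((2 : ℝ) ^ (1 - ((j : ℤ) + 1))) (openCube x ((2 : ℝ) ^ (-((j : ℤ) + 1)))) φ

lemma localOsc_succ (l : ℕ) (r : ℝ≥0∞) (φ : Rn n → ℝ) (j : ℕ) (x : Rn n) :
    localOsc l r φ (j + 1) x = deltaE n l r (1 / 2 ^ j) (ball x (1 / 2 ^ (j + 1))) φ := by
  have hside : (2 : ℝ) ^ (1 - ((j : ℤ) + 1)) = 1 / 2 ^ j := by
    rw [sub_add_cancel_right, zpow_neg, zpow_natCast, one_div]
  have hradius : (2 : ℝ) ^ (-((j : ℤ) + 1)) = 1 / 2 ^ (j + 1) := by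
    rw [← Nat.cast_succ, zpow_neg, zpow_natCast, one_div]
  rw [localOsc, hside, hradius, openCube_eq_ball x (by positivity)]

lemma volume_ball_half (x : Rn n) {s : ℝ} (hs : 0 < s) :
    volume (ball x (s / 2)) = ENNReal.ofReal s ^ n := by
  rw [Real.volume_pi_ball x (half_pos hs), mul_div_cancel₀ s two_ne_zero, Fintype.card_fin,
    ENNReal.ofReal_pow hs.le]

lemma eLpNorm_one_le_mul_eLpNorm {α : Type*} [MeasurableSpace α] {μ : Measure α} {f : α → ℝ}
    {a V : ℝ≥0∞} (hr : 1 ≤ r) (hf : AEStronglyMeasurable f μ) (ha : 1 ≤ a)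
    (hμ : μ Set.univ = a * V) :
    eLpNorm f 1 μ ≤ a * (V ^ (1 - 1 / r.toReal) * eLpNorm f r μ) := by
  have hexp : 0 ≤ 1 - 1 / r.toReal := by
    obtain rfl | hr_top := eq_or_ne r ∞
    · simp
    · have hr' : 1 ≤ r.toReal := by simpa using ENNReal.toReal_mono hr_top hr
      exact sub_nonneg.2 (div_le_one_of_le₀ hr' (zero_le_one.trans hr'))
  have hpow : a ^ (1 - 1 / r.toReal) ≤ a := by
    simpa using ENNReal.rpow_le_rpow_of_exponent_le ha
      (sub_le_self 1 (by positivity : 0 ≤ 1 / r.toReal))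
  calc eLpNorm f 1 μ
      ≤ eLpNorm f r μ * μ Set.univ ^ (1 / (1 : ℝ≥0∞).toReal - 1 / r.toReal) :=
        eLpNorm_le_eLpNorm_mul_rpow_measure_univ hr hf
    _ = a ^ (1 - 1 / r.toReal) * (V ^ (1 - 1 / r.toReal) * eLpNorm f r μ) := by
        rw [hμ, toReal_one, one_div_one, ENNReal.mul_rpow_of_nonneg _ _ hexp, mul_comm, mul_assoc]
    _ ≤ a * (V ^ (1 - 1 / r.toReal) * eLpNorm f r μ) := by gcongr

lemma deltaE_one_le {s : ℝ} (hr : 1 ≤ r) (hs : 0 < s) {Q : Set (Rn n)}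
    (hQ : volume Q = ENNReal.ofReal s ^ n) (hφ : Measurable φ) :
    deltaE n l 1 s Q φ ≤ 2 ^ n * deltaE n l r s Q φ := by
  have hs0 : ENNReal.ofReal s ≠ 0 := (ENNReal.ofReal_pos.2 hs).ne'
  have hvol : ((volume.restrict (openCube (0 : Rn n) s)).prod (volume.restrict Q)) Set.univ =
      2 ^ n * ENNReal.ofReal s ^ (2 * n : ℝ) := by
    have hcube : volume (openCube (0 : Rn n) s) = 2 ^ n * ENNReal.ofReal s ^ n := by
      rw [openCube_eq_ball 0 hs, ← mul_div_cancel_left₀ s (two_ne_zero' ℝ),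
        volume_ball_half 0 (by positivity), ENNReal.ofReal_mul zero_le_two, mul_pow,
        mul_div_cancel_left₀ s (two_ne_zero' ℝ), ENNReal.ofReal_ofNat]
    rw [← Set.univ_prod_univ, Measure.prod_prod, Measure.restrict_apply_univ,
      Measure.restrict_apply_univ, hQ, hcube, two_mul, ENNReal.rpow_add _ _ hs0 ofReal_ne_top,
      ENNReal.rpow_natCast, mul_assoc]
  unfold deltaE
  refine (mul_le_mul_right (eLpNorm_one_le_mul_eLpNorm hr
    (measurable_diffl l hφ).aestronglyMeasurable (one_le_pow₀ one_le_two) hvol) _).trans_eq ?_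
  rw [mul_left_comm, ← mul_assoc (_ ^ _) (_ ^ _) (eLpNorm _ _ _), ← ENNReal.rpow_mul,
    ← ENNReal.rpow_add _ _ hs0 ofReal_ne_top, toReal_one]
  congr 3
  ring

lemma deltaE_one_eq (j : ℕ) (Q : Set (Rn n)) (hφ : Measurable φ) :
    deltaE n l 1 (1 / 2 ^ j) Q φ =
      (2 ^ j) ^ (2 * n) * ∫⁻ x in Q, ∫⁻ h in ball 0 (1 / 2 ^ j), ‖diffl l h φ x‖ₑ := by
  have hscale : ENNReal.ofReal (1 / 2 ^ j) = (2 ^ j)⁻¹ := by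
    rw [one_div, ENNReal.ofReal_inv_of_pos (by positivity), ofReal_two_pow]
  have hpow : ((2 ^ j : ℝ≥0∞)⁻¹) ^ (-(2 * (n : ℝ)) / 1) = (2 ^ j) ^ (2 * n) := by
    rw [div_one, ENNReal.rpow_neg, ENNReal.inv_rpow, inv_inv, ← ENNReal.rpow_natCast (2 ^ j)]
    push_cast
    rfl
  rw [deltaE, toReal_one, hscale, hpow, openCube_eq_ball 0 (by positivity),
    eLpNorm_one_eq_lintegral_enorm,
    lintegral_prod_symm _ (measurable_diffl l hφ).enorm.aemeasurable]

lemma setLIntegral_enorm_le_localOsc_zero (l : ℕ) (hr : 1 ≤ r) (hφ : Measurable φ) (x : Rn n) :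
    ∫⁻ y in ball x 1, ‖φ y‖ₑ ≤ 2 ^ n * localOsc l r φ 0 x := by
  have hvol : (volume.restrict (ball x (1 : ℝ))) Set.univ = 2 ^ n * 1 := by
    rw [Measure.restrict_apply_univ, mul_one, ← mul_div_cancel_left₀ (1 : ℝ) (two_ne_zero' ℝ),
      volume_ball_half x (by positivity), mul_one, ENNReal.ofReal_ofNat]
  rw [localOsc, openCube_eq_ball x one_pos, ← eLpNorm_one_eq_lintegral_enorm]
  refine (eLpNorm_one_le_mul_eLpNorm hr hφ.aestronglyMeasurable
    (one_le_pow₀ one_le_two) hvol).trans_eq ?_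
  rw [ENNReal.one_rpow, one_mul]

lemma exists_setLIntegral_enorm_mollify_sub_mollify_le (n l : ℕ) (hr : 1 ≤ r) :
    ∃ C < ∞, ∀ φ : Rn n → ℝ, Measurable φ → LocallyIntegrable φ → ∀ j x,
      (2 ^ (j + 1)) ^ n *
        ∫⁻ y in ball x (1 / 2 ^ (j + 1)), ‖(mollify l (2 ^ (j + 1)) φ - mollify l (2 ^ j) φ) y‖ₑ ≤
      C * localOsc l r φ (j + 1) x := by
  obtain ⟨B, hB⟩ := exists_enorm_mollify_sub_le n l
  refine ⟨2 * B * (2 ^ (2 * n) * 2 ^ n), by finiteness, fun φ hφm hφ j x => ?_⟩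
  set D : Rn n → ℝ≥0∞ := fun y => ∫⁻ h in ball 0 (1 / 2 ^ j), ‖diffl l h φ y‖ₑ
  have herr (i : ℕ) (hi : j ≤ i) (hi' : i ≤ j + 1) (y : Rn n) :
      ‖mollify l (2 ^ i) φ y - φ y‖ₑ ≤ B * (2 ^ (j + 1)) ^ n * D y := by
    refine (hB _ (by positivity) φ hφ y).trans ?_
    rw [ofReal_two_pow]
    gcongr
    · exact one_le_two
    · exact lintegral_mono_set (ball_subset_ball (by gcongr; exact one_le_two))
  have hincr (y : Rn n) : ‖(mollify l (2 ^ (j + 1)) φ - mollify l (2 ^ j) φ) y‖ₑ ≤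
      2 * B * (2 ^ (j + 1)) ^ n * D y := by
    rw [Pi.sub_apply, ← sub_sub_sub_cancel_right _ _ (φ y), mul_assoc 2, mul_assoc 2, two_mul]
    exact enorm_sub_le.trans (add_le_add (herr _ j.le_succ le_rfl y) (herr _ le_rfl j.le_succ y))
  have hvol : volume (ball x (1 / 2 ^ (j + 1))) = ENNReal.ofReal (1 / 2 ^ j) ^ n := by
    rw [pow_succ, ← div_div, volume_ball_half x (by positivity)]
  calc _ ≤ (2 ^ (j + 1)) ^ n *
          ∫⁻ y in ball x (1 / 2 ^ (j + 1)), 2 * B * (2 ^ (j + 1)) ^ n * D y := by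
        gcongr (2 ^ (j + 1)) ^ n * ?_
        exact lintegral_mono hincr
    _ = 2 * B * (2 ^ (2 * n) * deltaE n l 1 (1 / 2 ^ j) (ball x (1 / 2 ^ (j + 1))) φ) := by
        rw [lintegral_const_mul' _ _ (by finiteness), deltaE_one_eq j _ hφm]
        ring
    _ ≤ 2 * B * (2 ^ (2 * n) * (2 ^ n * localOsc l r φ (j + 1) x)) := by
        rw [localOsc_succ]
        gcongr
        exact deltaE_one_le hr (by positivity) hvol hφm
    _ = _ := by ring

lemma exists_enorm_iterPD_layer_zero_le (l : ℕ) (hr : 1 ≤ r) (L : List (Fin n)) :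
    ∃ C < ∞, ∀ φ : Rn n → ℝ, Measurable φ → LocallyIntegrable φ → ∀ x x', ‖x - x'‖ ≤ 1 / 2 →
      ‖iterPD L (layer l φ 0) x‖ₑ ≤ C * localOsc l r φ 0 x' := by
  have hκ := isSmoothKernel_mollKernel n l
  obtain ⟨B, hB⟩ := hκ.exists_iterPD_dilate_convolution_le L
  set K := ∫⁻ u, ‖mollKernel n l u‖ₑ
  have hK : K ≠ ∞ := hκ.integrable.2.ne
  refine ⟨B * (K * 2 ^ n), by finiteness, fun φ hφm hφ x x' hx => ?_⟩
  have hcentre : ball x (1 / 4 + 1 / 8 / 1) ⊆ ball x' 1 :=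
    ball_subset_ball' (by rw [dist_eq_norm]; linarith)
  calc ‖iterPD L (layer l φ 0) x‖ₑ
      ≤ B * ENNReal.ofReal 1 ^ (L.length + n) *
          ∫⁻ y in closedBall x (1 / 8 / 1), ‖mollify l 1 φ y‖ₑ := by
        rw [layer, smoothApprox, pow_zero]
        exact hB 1 one_pos _ (locallyIntegrable_mollify l one_pos hφ) x
    _ ≤ B * ∫⁻ y in ball x (1 / 4), ‖mollify l 1 φ y‖ₑ := by
        rw [ofReal_one, one_pow, mul_one]
        gcongr B * ?_
        exact lintegral_mono_set (closedBall_subset_ball (by norm_num))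
    _ ≤ B * (K * ∫⁻ y in ball x (1 / 4 + 1 / 8 / 1), ‖φ y‖ₑ) := by
        gcongr B * ?_
        exact setLIntegral_enorm_mollify_le l one_pos hφm x _
    _ ≤ B * (K * (2 ^ n * localOsc l r φ 0 x')) := by
        gcongr B * (K * ?_)
        exact (lintegral_mono_set hcentre).trans (setLIntegral_enorm_le_localOsc_zero l hr hφm x')
    _ = B * (K * 2 ^ n) * localOsc l r φ 0 x' := by ring

lemma exists_enorm_iterPD_layer_succ_le (l : ℕ) (hr : 1 ≤ r) (L : List (Fin n)) :
    ∃ C < ∞, ∀ φ : Rn n → ℝ, Measurable φ → LocallyIntegrable φ →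
      ∀ j x x', ‖x - x'‖ ≤ 1 / 2 ^ (j + 2) →
      ‖iterPD L (layer l φ (j + 1)) x‖ₑ ≤
        C * (2 ^ (j + 1)) ^ L.length * localOsc l r φ (j + 1) x' := by
  obtain ⟨B, hB⟩ := (isSmoothKernel_mollKernel n l).exists_iterPD_dilate_convolution_le L
  obtain ⟨C, hC, hincr⟩ := exists_setLIntegral_enorm_mollify_sub_mollify_le n l hr
  refine ⟨2 * B * C, by finiteness, fun φ hφm hφ j x x' hx => ?_⟩
  have hφt (i : ℕ) := contDiff_mollify l (show (0 : ℝ) < 2 ^ i by positivity) hφ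
  set ρ := mollify l (2 ^ (j + 1)) φ - mollify l (2 ^ j) φ
  have hρ : LocallyIntegrable ρ := ((hφt _).sub (hφt _)).continuous.locallyIntegrable
  set I := ∫⁻ y in ball x' (1 / 2 ^ (j + 1)), ‖ρ y‖ₑ
  have hradius : 1 / 8 / 2 ^ j + 1 / 2 ^ (j + 2) < (1 : ℝ) / 2 ^ (j + 1) := by
    rw [pow_add, pow_add]
    field_simp
    norm_num
  have hterm (i : ℕ) (hi : j ≤ i) (hi' : i ≤ j + 1) :
      ‖iterPD L (mollify l (2 ^ i) ρ) x‖ₑ ≤ B * (2 ^ (j + 1)) ^ (L.length + n) * I := by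
    refine (hB _ (by positivity) ρ hρ x).trans ?_
    rw [ofReal_two_pow]
    gcongr
    · exact one_le_two
    · refine lintegral_mono_set (Set.Subset.trans (closedBall_subset_closedBall
        (ε₂ := 1 / 8 / 2 ^ j) (by gcongr; exact one_le_two)) (closedBall_subset_ball' ?_))
      rw [dist_eq_norm]
      linarith
  calc ‖iterPD L (layer l φ (j + 1)) x‖ₑ
      ≤ B * (2 ^ (j + 1)) ^ (L.length + n) * I + B * (2 ^ (j + 1)) ^ (L.length + n) * I := by
        rw [layer_succ l hφ, iterPD_add L (contDiff_mollify l (by positivity) hρ)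
          (contDiff_mollify l (by positivity) hρ)]
        exact (enorm_add_le _ _).trans
          (add_le_add (hterm _ j.le_succ le_rfl) (hterm _ le_rfl j.le_succ))
    _ = 2 * B * (2 ^ (j + 1)) ^ L.length * ((2 ^ (j + 1)) ^ n * I) := by ring
    _ ≤ 2 * B * (2 ^ (j + 1)) ^ L.length * (C * localOsc l r φ (j + 1) x') := by
        gcongr _ * ?_
        exact hincr φ hφm hφ j x'
    _ = 2 * B * C * (2 ^ (j + 1)) ^ L.length * localOsc l r φ (j + 1) x' := by ring

lemma exists_enorm_iterPD_layer_le (l : ℕ) (hr : 1 ≤ r) (L : List (Fin n)) :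
    ∃ C < ∞, ∀ φ : Rn n → ℝ, Measurable φ → LocallyIntegrable φ →
      ∀ j x x', ‖x - x'‖ ≤ 1 / 2 ^ (j + 1) →
      ‖iterPD L (layer l φ j) x‖ₑ ≤ C * (2 ^ j) ^ L.length * localOsc l r φ j x' := by
  obtain ⟨C₀, hC₀, hzero⟩ := exists_enorm_iterPD_layer_zero_le l hr L
  obtain ⟨C₁, hC₁, hsucc⟩ := exists_enorm_iterPD_layer_succ_le l hr L
  refine ⟨max C₀ C₁, max_lt hC₀ hC₁, fun φ hφm hφ j x x' hx => ?_⟩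
  cases j with
  | zero =>
    rw [pow_zero, one_pow, mul_one]
    exact (hzero φ hφm hφ x x' (by simpa using hx)).trans (by gcongr; exact le_max_left _ _)
  | succ j => exact (hsucc φ hφm hφ j x x' hx).trans (by gcongr; exact le_max_right _ _)

end Oscillation

/-! ### Oscillation coefficients on dyadic cubes -/

section Coefficients

variable {n d l : ℕ}

lemma dyadicCubeHalf_eq_pi (k : ℕ) (m : Fin n → ℤ) : dyadicCubeHalf n k m =
    Set.univ.pi fun i => Set.Ico ((m i : ℝ) / 2 ^ k) (((m i : ℝ) + 1) / 2 ^ k) := by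
  ext x; simp [dyadicCubeHalf]

lemma measurableSet_dyadicCubeHalf (k : ℕ) (m : Fin n → ℤ) :
    MeasurableSet (dyadicCubeHalf n k m) := by
  rw [dyadicCubeHalf_eq_pi]
  exact MeasurableSet.univ_pi fun _ => measurableSet_Ico

lemma volume_dyadicCubeHalf (k : ℕ) (m : Fin n → ℤ) :
    volume (dyadicCubeHalf n k m) = ((2 ^ k) ^ n)⁻¹ := by
  rw [dyadicCubeHalf_eq_pi, Real.volume_pi_Ico]
  simp_rw [← sub_div, add_sub_cancel_left, one_div,
    ENNReal.ofReal_inv_of_pos (show (0 : ℝ) < 2 ^ k by positivity), ofReal_two_pow]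
  rw [Finset.prod_const, Finset.card_univ, Fintype.card_fin, ← ENNReal.inv_pow]

lemma pairwise_disjoint_dyadicCubeHalf (n k : ℕ) :
    Pairwise (Function.onFun Disjoint (dyadicCubeHalf n k)) := fun m m' hne =>
  Set.disjoint_left.2 fun x hx hx' =>
    hne (((mem_dyadicCubeHalf_iff k x m).1 hx).symm.trans ((mem_dyadicCubeHalf_iff k x m').1 hx'))

lemma norm_sub_le_of_mem_dyadicCubeHalf {k : ℕ} {m : Fin n → ℤ} {x x' : Rn n}
    (hx : x ∈ dyadicCubeHalf n k m) (hx' : x' ∈ dyadicCubeHalf n k m) :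
    ‖x - x'‖ ≤ 1 / 2 ^ k := by
  refine (pi_norm_le_iff_of_nonneg (by positivity)).2 fun i => ?_
  have hi := hx i
  have hi' := hx' i
  rw [add_div] at hi hi'
  rw [Pi.sub_apply, Real.norm_eq_abs, abs_le]
  constructor <;> linarith

lemma measurableSet_Xi (n d k : ℕ) (m : Fin n → ℤ) : MeasurableSet (Xi n d k m) := by
  have hcube : MeasurableSet (dyadicCube n k m) := by
    have hpi : dyadicCube n k m =
        Set.univ.pi fun i => Set.Ioo ((m i : ℝ) / 2 ^ k) (((m i : ℝ) + 1) / 2 ^ k) := by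
      ext x; simp [dyadicCube]
    rw [hpi]
    exact MeasurableSet.univ_pi fun _ => measurableSet_Ioo
  have hnorm : Measurable fun z : Rn (n + d) => euclNorm (projY z) :=
    (continuous_euclNorm.comp projY.continuous).measurable
  exact (projX.continuous.measurable hcube).inter
    ((measurableSet_lt hnorm measurable_const).inter (measurableSet_le measurable_const hnorm))

lemma gammaHat_rpow {p : ℝ≥0∞} (hp0 : p ≠ 0) (hp : p ≠ ∞) {γ : Rn (n + d) → ℝ} (hγ : IsWeight γ)
    (k : ℕ) (m : Fin n → ℤ) :
    gammaHat n d p γ k m ^ p.toReal = weightMeasure (fun x => γ x ^ p.toReal) (Xi n d k m) := by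
  have hp' : 0 < p.toReal := ENNReal.toReal_pos hp0 hp
  rw [gammaHat, weightMeasure, eLpNorm_eq_lintegral_rpow_enorm_toReal hp0 hp, ← ENNReal.rpow_mul,
    one_div_mul_cancel hp'.ne', ENNReal.rpow_one, withDensity_apply _ (measurableSet_Xi n d k m)]
  refine lintegral_congr fun x => ?_
  rw [Real.enorm_of_nonneg (hγ.2 x).le, ENNReal.ofReal_rpow_of_nonneg (hγ.2 x).le hp'.le]

lemma gammaSeq_rpow {p : ℝ≥0∞} (hp0 : p ≠ 0) (hp : p ≠ ∞) {γ : Rn (n + d) → ℝ} (hγ : IsWeight γ)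
    (k : ℕ) (x : Rn n) :
    gammaSeq n d p l γ k x ^ p.toReal = ((2 ^ k) ^ l) ^ p.toReal * (2 ^ k) ^ n *
      weightMeasure (fun x => γ x ^ p.toReal) (Xi n d k (dyadicIndex k x)) := by
  have hp' : 0 < p.toReal := ENNReal.toReal_pos hp0 hp
  have hexp : ((k : ℝ) * (l + n / p.toReal)) * p.toReal = k * l * p.toReal + k * n := by
    field_simp
  have hscale : ((2 : ℝ≥0∞) ^ ((k : ℝ) * (l + n / p.toReal))) ^ p.toReal =
      ((2 ^ k) ^ l) ^ p.toReal * (2 ^ k) ^ n := by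
    rw [← ENNReal.rpow_mul, hexp, ENNReal.rpow_add _ _ two_ne_zero ofNat_ne_top, ENNReal.rpow_mul,
      ENNReal.rpow_mul, ENNReal.rpow_mul, ENNReal.rpow_natCast, ENNReal.rpow_natCast,
      ENNReal.rpow_natCast]
  rw [gammaSeq, tsum_indicator_dyadicCubeHalf, ENNReal.mul_rpow_of_nonneg _ _ hp'.le,
    gammaHat_rpow hp0 hp hγ, hscale]

/-- The `L_p` mean of `localOsc l r φ j` over the half-open dyadic cube of side `2⁻ʲ⁻¹` and index
`m`. -/
def oscMean (l : ℕ) (r : ℝ≥0∞) (p : ℝ) (φ : Rn n → ℝ) (j : ℕ) (m : Fin n → ℤ) : ℝ≥0∞ :=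
  ((2 ^ (j + 1)) ^ n * ∫⁻ x in dyadicCubeHalf n (j + 1) m, localOsc l r φ j x ^ p) ^ (1 / p)

/-- The mean oscillation rescaled to the size of the `l`-th derivatives at scale `2⁻ʲ`. -/
def oscCoeff (l : ℕ) (r : ℝ≥0∞) (p : ℝ) (φ : Rn n → ℝ) (j : ℕ) (m : Fin n → ℤ) : ℝ≥0∞ :=
  (2 ^ j) ^ l * oscMean l r p φ j m

variable {r : ℝ≥0∞}

lemma oscMean_rpow {p : ℝ} (hp : 0 < p) (φ : Rn n → ℝ) (j : ℕ) (m : Fin n → ℤ) :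
    oscMean l r p φ j m ^ p =
      (2 ^ (j + 1)) ^ n * ∫⁻ x in dyadicCubeHalf n (j + 1) m, localOsc l r φ j x ^ p := by
  rw [oscMean, ← ENNReal.rpow_mul, one_div_mul_cancel hp.ne', ENNReal.rpow_one]

lemma le_mul_oscMean {p : ℝ} (hp : 0 < p) {φ : Rn n → ℝ} {j : ℕ} {m : Fin n → ℤ} {a c : ℝ≥0∞}
    (hc : c ≠ ∞) (h : ∀ x ∈ dyadicCubeHalf n (j + 1) m, a ≤ c * localOsc l r φ j x) :
    a ≤ c * oscMean l r p φ j m := by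
  rw [← ENNReal.rpow_le_rpow_iff hp, ENNReal.mul_rpow_of_nonneg _ _ hp.le, oscMean_rpow hp]
  set Q := dyadicCubeHalf n (j + 1) m
  calc a ^ p = (2 ^ (j + 1)) ^ n * ∫⁻ _ in Q, a ^ p := by
        rw [setLIntegral_const, volume_dyadicCubeHalf, mul_left_comm,
          ENNReal.mul_inv_cancel (by positivity) (by finiteness), mul_one]
    _ ≤ (2 ^ (j + 1)) ^ n * ∫⁻ x in Q, c ^ p * localOsc l r φ j x ^ p := by
        refine mul_le_mul_right (setLIntegral_mono' (measurableSet_dyadicCubeHalf _ _)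
          fun x hx => ?_) _
        rw [← ENNReal.mul_rpow_of_nonneg _ _ hp.le]
        exact ENNReal.rpow_le_rpow (h x hx) hp.le
    _ = c ^ p * ((2 ^ (j + 1)) ^ n * ∫⁻ x in Q, localOsc l r φ j x ^ p) := by
        rw [lintegral_const_mul' _ _ (ENNReal.rpow_ne_top_of_nonneg hp.le hc), mul_left_comm]

lemma exists_enorm_iterPD_layer_le_oscMean (l : ℕ) (hr : 1 ≤ r) {p : ℝ} (hp : 0 < p)
    (L : List (Fin n)) :
    ∃ C < ∞, ∀ φ : Rn n → ℝ, Measurable φ → LocallyIntegrable φ → ∀ j x,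
      ‖iterPD L (layer l φ j) x‖ₑ ≤
        C * (2 ^ j) ^ L.length * oscMean l r p φ j (dyadicIndex (j + 1) x) := by
  obtain ⟨C, hC, h⟩ := exists_enorm_iterPD_layer_le l hr L
  refine ⟨C, hC, fun φ hφm hφ j x => le_mul_oscMean hp (by finiteness) fun x' hx' => ?_⟩
  exact h φ hφm hφ j x x'
    (norm_sub_le_of_mem_dyadicCubeHalf ((mem_dyadicCubeHalf_iff _ x _).2 rfl) hx')

lemma oscCoeff_rpow_mul_weightMeasure_le {p : ℝ≥0∞} (hp0 : p ≠ 0) (hp : p ≠ ∞)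
    {γ : Rn (n + d) → ℝ} (hγ : IsWeight γ) (φ : Rn n → ℝ) (j : ℕ) (m : Fin n → ℤ) :
    oscCoeff l r p.toReal φ j m ^ p.toReal *
        weightMeasure (fun x => γ x ^ p.toReal) (Xi n d j (parentIndex m)) ≤
      2 ^ n * ∫⁻ x in dyadicCubeHalf n (j + 1) m,
        (gammaSeq n d p l γ j x * localOsc l r φ j x) ^ p.toReal := by
  have hp' : 0 < p.toReal := ENNReal.toReal_pos hp0 hp
  set W := weightMeasure (fun x => γ x ^ p.toReal) (Xi n d j (parentIndex m))
  set T := ((2 ^ j) ^ l) ^ p.toReal * (2 ^ j) ^ n * W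
  have hT (x : Rn n) (hx : x ∈ dyadicCubeHalf n (j + 1) m) :
      gammaSeq n d p l γ j x ^ p.toReal = T := by
    rw [gammaSeq_rpow hp0 hp hγ, ← parentIndex_dyadicIndex, (mem_dyadicCubeHalf_iff _ _ _).1 hx]
  calc oscCoeff l r p.toReal φ j m ^ p.toReal * W
      = 2 ^ n * (T * ∫⁻ x in dyadicCubeHalf n (j + 1) m, localOsc l r φ j x ^ p.toReal) := by
        rw [oscCoeff, ENNReal.mul_rpow_of_nonneg _ _ hp'.le, oscMean_rpow hp', pow_succ, mul_pow]
        ring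
    _ ≤ 2 ^ n * ∫⁻ x in dyadicCubeHalf n (j + 1) m, T * localOsc l r φ j x ^ p.toReal :=
        mul_le_mul_right (lintegral_const_mul_le _ _) _
    _ = _ := by
        congr 1
        refine setLIntegral_congr_fun (measurableSet_dyadicCubeHalf _ _) fun x hx => ?_
        rw [ENNReal.mul_rpow_of_nonneg _ _ hp'.le, hT x hx]

lemma tsum_lintegral_localOsc_le {p : ℝ≥0∞} (hp0 : p ≠ 0) (hp : p ≠ ∞)
    (T : ℕ → Rn n → ℝ≥0∞) (φ : Rn n → ℝ) :
    ∑' j, ∫⁻ x, (T j x * localOsc l r φ j x) ^ p.toReal ≤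
      2 * tildeBnormE n l p p r T φ ^ p.toReal := by
  have hp' : 0 < p.toReal := ENNReal.toReal_pos hp0 hp
  have hroot (X : ℝ≥0∞) : (X ^ (1 / p.toReal)) ^ p.toReal = X := by
    rw [← ENNReal.rpow_mul, one_div_mul_cancel hp'.ne', ENNReal.rpow_one]
  set I : ℕ → ℝ≥0∞ := fun j => ∫⁻ x, (T j x * localOsc l r φ j x) ^ p.toReal
  have hnorm : tildeBnormE n l p p r T φ =
      (∑' j, I (j + 1)) ^ (1 / p.toReal) + I 0 ^ (1 / p.toReal) := by
    simp only [tildeBnormE, lqNorm, lpNormE, if_neg hp, hroot]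
    rfl
  rw [tsum_eq_zero_add' ENNReal.summable, two_mul, hnorm]
  refine add_le_add ?_ ?_
  · exact (hroot (I 0)).symm.trans_le (ENNReal.rpow_le_rpow le_add_self hp'.le)
  · exact (hroot _).symm.trans_le (ENNReal.rpow_le_rpow le_self_add hp'.le)

lemma tsum_oscCoeff_rpow_mul_weightMeasure_le {p : ℝ≥0∞} (hp0 : p ≠ 0) (hp : p ≠ ∞)
    {γ : Rn (n + d) → ℝ} (hγ : IsWeight γ) (φ : Rn n → ℝ) :
    (∑' j, ∑' m, oscCoeff l r p.toReal φ j m ^ p.toReal *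
        weightMeasure (fun x => γ x ^ p.toReal) (Xi n d j (parentIndex m))) ^ (1 / p.toReal) ≤
      (2 ^ n * 2) ^ (1 / p.toReal) * tildeBnormE n l p p r (gammaSeq n d p l γ) φ := by
  have hp' : 0 < p.toReal := ENNReal.toReal_pos hp0 hp
  set N := tildeBnormE n l p p r (gammaSeq n d p l γ) φ
  have hlevel (j : ℕ) : ∑' m, oscCoeff l r p.toReal φ j m ^ p.toReal *
        weightMeasure (fun x => γ x ^ p.toReal) (Xi n d j (parentIndex m)) ≤
      2 ^ n * ∫⁻ x, (gammaSeq n d p l γ j x * localOsc l r φ j x) ^ p.toReal := by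
    refine (ENNReal.tsum_le_tsum fun m =>
      oscCoeff_rpow_mul_weightMeasure_le hp0 hp hγ φ j m).trans ?_
    rw [ENNReal.tsum_mul_left, ← lintegral_iUnion (measurableSet_dyadicCubeHalf _)
      (pairwise_disjoint_dyadicCubeHalf n _)]
    exact mul_le_mul_right (setLIntegral_le_lintegral _ _) _
  calc _ ≤ (2 ^ n * (2 * N ^ p.toReal)) ^ (1 / p.toReal) := by
        refine ENNReal.rpow_le_rpow ((ENNReal.tsum_le_tsum hlevel).trans ?_) (by positivity)
        rw [ENNReal.tsum_mul_left]
        exact mul_le_mul_right (tsum_lintegral_localOsc_le hp0 hp _ φ) _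
    _ = (2 ^ n * 2) ^ (1 / p.toReal) * N := by
        rw [← mul_assoc, ENNReal.mul_rpow_of_nonneg _ _ (by positivity), ← ENNReal.rpow_mul,
          mul_one_div_cancel hp'.ne', ENNReal.rpow_one]

end Coefficients

/-! ### The extension operator and its trace -/

section Extension

open Metric Topology

variable {n d l : ℕ} {φ : Rn n → ℝ}

/-- A smooth cutoff on `ℝ^d`, equal to `1` on the cube of half-side `1 / 8` and to `0` off the cube
of half-side `1 / 4`. -/
def cutoff (d : ℕ) : ContDiffBump (0 : Rn d) := ⟨1 / 8, 3 / 16, by norm_num, by norm_num⟩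

lemma iterPD_cutoff_eq_zero (L : List (Fin d)) {y : Rn d} (hy : 1 / 4 ≤ ‖y‖) :
    iterPD L (cutoff d) y = 0 := by
  by_contra hne
  have hmem := tsupport_iterPD_subset L (cutoff d) (subset_tsupport _ hne)
  rw [(cutoff d).tsupport_eq, mem_closedBall_zero_iff] at hmem
  linarith [show (cutoff d).rOut = 3 / 16 from rfl]

/-- The `j`-th term of the extension of `φ`: the `j`-th layer, cut off at distance comparable to
`2⁻ʲ` from the plane `y = 0`. -/
def extensionTerm (d l : ℕ) (φ : Rn n → ℝ) (j : ℕ) : Rn (n + d) → ℝ :=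
  tensor (layer l φ j) fun y => cutoff d ((2 : ℝ) ^ j • y)

lemma contDiff_cutoff_smul (d j : ℕ) :
    ContDiff ℝ (⊤ : ℕ∞) fun y : Rn d => cutoff d ((2 : ℝ) ^ j • y) :=
  (cutoff d).contDiff.comp (contDiff_const_smul _)

lemma contDiff_extensionTerm (d l : ℕ) (hφ : LocallyIntegrable φ) (j : ℕ) :
    ContDiff ℝ (⊤ : ℕ∞) (extensionTerm d l φ j) :=
  contDiff_tensor (contDiff_layer l hφ j) (contDiff_cutoff_smul d j)

lemma norm_two_pow_smul (j : ℕ) (y : Rn d) : ‖(2 : ℝ) ^ j • y‖ = 2 ^ j * ‖y‖ := by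
  rw [norm_smul, norm_pow, Real.norm_ofNat]

lemma exists_enorm_iterPD_extensionTerm_le (d l : ℕ) {r : ℝ≥0∞} (hr : 1 ≤ r) {p : ℝ} (hp : 0 < p)
    (L : List (Fin (n + d))) :
    ∃ C < ∞, ∀ φ : Rn n → ℝ, Measurable φ → LocallyIntegrable φ → L.length ≤ l → ∀ j z,
      ‖iterPD L (extensionTerm d l φ j) z‖ₑ ≤
        C * (slab n d j).indicator
          (fun z => oscCoeff l r p φ j (dyadicIndex (j + 1) (projX z))) z := by
  obtain ⟨L₁, L₂, hlen, htensor⟩ := exists_iterPD_tensor L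
  obtain ⟨C, hC, hlayer⟩ := exists_enorm_iterPD_layer_le_oscMean l hr hp L₁
  obtain ⟨B, hB⟩ := (hasCompactSupport_iterPD L₂ (cutoff d).hasCompactSupport)
    |>.exists_bound_of_continuous (contDiff_iterPD L₂ (cutoff d).contDiff).continuous
  refine ⟨C * ENNReal.ofReal B, by finiteness, fun φ hφm hφ hL j z => ?_⟩
  have hsplit : iterPD L (extensionTerm d l φ j) z = iterPD L₁ (layer l φ j) (projX z) *
      (((2 : ℝ) ^ j) ^ L₂.length * iterPD L₂ (cutoff d) ((2 : ℝ) ^ j • projY z)) := by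
    rw [extensionTerm, htensor _ _ (contDiff_layer l hφ j) (contDiff_cutoff_smul d j),
      iterPD_comp_smul L₂ (cutoff d).contDiff, tensor]
  by_cases hz : z ∈ slab n d j
  · have hcut : ‖iterPD L₂ (cutoff d) ((2 : ℝ) ^ j • projY z)‖ₑ ≤ ENNReal.ofReal B := by
      rw [← ofReal_norm]
      exact ENNReal.ofReal_le_ofReal (hB _)
    have hscale : ‖((2 : ℝ) ^ j) ^ L₂.length‖ₑ = (2 ^ j) ^ L₂.length := by
      rw [Real.enorm_of_nonneg (by positivity), ENNReal.ofReal_pow (by positivity), ofReal_two_pow]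
    rw [Set.indicator_of_mem hz, hsplit, enorm_mul, enorm_mul, hscale, oscCoeff]
    set M := oscMean l r p φ j (dyadicIndex (j + 1) (projX z))
    calc _ ≤ C * (2 ^ j) ^ L₁.length * M * ((2 ^ j) ^ L₂.length * ENNReal.ofReal B) :=
          mul_le_mul' (hlayer φ hφm hφ j _) (mul_le_mul_right hcut _)
      _ = C * ENNReal.ofReal B * ((2 ^ j) ^ L.length * M) := by rw [← hlen, pow_add]; ring
      _ ≤ C * ENNReal.ofReal B * ((2 ^ j) ^ l * M) := by
          gcongr
          exact one_le_pow₀ one_le_two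
  · have hfar : 1 / 4 ≤ ‖(2 : ℝ) ^ j • (projY z : Rn d)‖ := by
      have hy : ((2 : ℝ) ^ (j + 2))⁻¹ ≤ ‖(projY z : Rn d)‖ := not_lt.1 hz
      rw [pow_add, mul_inv, ← div_eq_inv_mul, div_le_iff₀' (by positivity)] at hy
      rw [norm_two_pow_smul]
      linarith
    rw [hsplit, iterPD_cutoff_eq_zero L₂ hfar, mul_zero, mul_zero, enorm_zero]
    exact zero_le

lemma enorm_add_smul_sub_sub_le {E : Type*} [NormedAddCommGroup E] [NormedSpace ℝ E] {c : ℝ}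
    (hc0 : 0 ≤ c) (hc1 : c ≤ 1) (u v a : E) : ‖u + c • (v - u) - a‖ₑ ≤ ‖u - a‖ₑ + ‖v - a‖ₑ := by
  have hsplit : u + c • (v - u) - a = (1 - c) • (u - a) + c • (v - a) := by module
  have hle {t : ℝ} (h0 : 0 ≤ t) (h1 : t ≤ 1) (w : E) : ‖t • w‖ₑ ≤ ‖w‖ₑ := by
    rw [← ofReal_norm, ← ofReal_norm, norm_smul_of_nonneg h0]
    exact ENNReal.ofReal_le_ofReal (mul_le_of_le_one_left (norm_nonneg _) h1)
  rw [hsplit]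
  calc _ ≤ ‖(1 - c) • (u - a)‖ₑ + ‖c • (v - a)‖ₑ := enorm_add_le _ _
    _ ≤ _ := by
        gcongr
        exacts [hle (sub_nonneg.2 hc1) (sub_le_self _ hc0) _, hle hc0 hc1 _]

-- On this shell only `cutoff d (2^{i+1} y)` is neither `0` nor `1`, so the series telescopes to a
-- convex combination of two consecutive approximations of `φ`.
lemma enorm_tsum_extensionTerm_append_sub_le (l : ℕ) (φ : Rn n → ℝ) {i : ℕ} {y : Rn d}
    (hy : ‖y‖ ≤ (2 ^ (i + 3))⁻¹) (hy' : (2 ^ (i + 4))⁻¹ ≤ ‖y‖) (x : Rn n) (a : ℝ) :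
    ‖(∑' j, extensionTerm d l φ j (Fin.append x y)) - a‖ₑ ≤
      ‖smoothApprox l φ i x - a‖ₑ + ‖smoothApprox l φ (i + 1) x - a‖ₑ := by
  have happ (j : ℕ) : extensionTerm d l φ j (Fin.append x y) =
      layer l φ j x * cutoff d ((2 : ℝ) ^ j • y) := by
    simp only [extensionTerm, tensor, projX_append, projY_append]
  have hzero (j : ℕ) (hj : j ∉ Finset.range (i + 1 + 1)) :
      extensionTerm d l φ j (Fin.append x y) = 0 := by
    have hfar : 1 / 4 ≤ ‖(2 : ℝ) ^ j • y‖ := by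
      have hj' : i + 2 ≤ j := not_lt.1 (mt Finset.mem_range.2 hj)
      calc (1 : ℝ) / 4 = 2 ^ (i + 2) * (2 ^ (i + 4))⁻¹ := by
            rw [pow_add, pow_add]; field_simp; norm_num
        _ ≤ 2 ^ j * ‖y‖ := by gcongr; norm_num
        _ = ‖(2 : ℝ) ^ j • y‖ := (norm_two_pow_smul j y).symm
    rw [happ, show cutoff d ((2 : ℝ) ^ j • y) = 0 from iterPD_cutoff_eq_zero [] hfar, mul_zero]
  have hone (j : ℕ) (hj : j ∈ Finset.range (i + 1)) :
      extensionTerm d l φ j (Fin.append x y) = layer l φ j x := by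
    have hnear : ‖(2 : ℝ) ^ j • y‖ ≤ 1 / 8 := by
      have hj' : j ≤ i := Nat.lt_succ_iff.1 (Finset.mem_range.1 hj)
      calc ‖(2 : ℝ) ^ j • y‖ = 2 ^ j * ‖y‖ := norm_two_pow_smul j y
        _ ≤ 2 ^ i * (2 ^ (i + 3))⁻¹ := by gcongr; norm_num
        _ = 1 / 8 := by rw [pow_add]; field_simp; norm_num
    rw [happ, (cutoff d).one_of_mem_closedBall (mem_closedBall_zero_iff.2 hnear), mul_one]
  calc ‖(∑' j, extensionTerm d l φ j (Fin.append x y)) - a‖ₑ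
      = ‖smoothApprox l φ i x + cutoff d ((2 : ℝ) ^ (i + 1) • y) •
          (smoothApprox l φ (i + 1) x - smoothApprox l φ i x) - a‖ₑ := by
        rw [tsum_eq_sum hzero, Finset.sum_range_succ, Finset.sum_congr rfl hone, sum_range_layer,
          happ, layer, smul_eq_mul, mul_comm, Pi.sub_apply]
    _ ≤ _ := enorm_add_smul_sub_sub_le (cutoff d).nonneg (cutoff d).le_one _ _ _

lemma ae_projY_ne_zero (hd : 0 < d) : ∀ᵐ z : Rn (n + d), (projY z : Rn d) ≠ 0 := by
  refine measure_mono_null (fun z hz => Set.mem_iInter.2 fun k => ?_)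
    (volume_iInter_slab (n := n) hd)
  have hz0 : (projY z : Rn d) = 0 := not_not.1 hz
  change ‖(projY z : Rn d)‖ < _
  rw [hz0, norm_zero]
  positivity

lemma cubeAt_subset_ball (c : Rn n) {s : ℝ} (hs : 0 < s) : cubeAt c s ⊆ ball 0 (‖c‖ + s) := by
  intro x hx
  refine mem_ball_zero_iff.2 ((pi_norm_lt_iff (by positivity)).2 fun i => ?_)
  have hc := abs_le.1 (norm_le_pi_norm c i)
  exact abs_lt.2 ⟨by linarith [hx i], by linarith [(hx i).2]⟩

lemma isTraceSob_of_tendsto_setLIntegral (hd : 0 < d) {f : Rn (n + d) → ℝ}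
    (h : ∀ R, Tendsto (fun y : Rn d => ∫⁻ x in ball 0 R, ‖f (Fin.append x y) - φ x‖ₑ)
      (𝓝[≠] 0) (𝓝 0)) : IsTraceSob f φ := by
  refine ⟨fun z => if (projY z : Rn d) = 0 then φ (projX z) else f z, ?_, fun c s hs => ?_⟩
  · filter_upwards [ae_projY_ne_zero hd] with z hz using if_neg hz
  simp only [projX_append, projY_append]
  rw [← nhdsNE_sup_pure, tendsto_sup]
  constructor
  · refine tendsto_zero_iff_enorm_tendsto_zero.2 <| tendsto_of_tendsto_of_tendsto_of_le_of_le'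
      tendsto_const_nhds (h (‖c‖ + s)) (Eventually.of_forall fun _ => zero_le) ?_
    filter_upwards [self_mem_nhdsWithin] with y (hy : y ≠ 0)
    simp only [if_neg hy]
    calc _ ≤ ∫⁻ x in cubeAt c s, ‖|f (Fin.append x y) - φ x|‖ₑ :=
          enorm_integral_le_lintegral_enorm _
      _ ≤ ∫⁻ x in ball 0 (‖c‖ + s), ‖|f (Fin.append x y) - φ x|‖ₑ :=
          lintegral_mono_set (cubeAt_subset_ball c hs)
      _ = _ := by simp only [Real.enorm_abs]
  · rw [tendsto_pure_left]
    intro S hS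
    simpa using mem_of_mem_nhds hS

lemma exists_mem_dyadic_shell {J : ℕ} {t : ℝ} (ht : 0 < t) (htJ : t < (2 ^ (J + 3))⁻¹) :
    ∃ i ≥ J, t ≤ (2 ^ (i + 3))⁻¹ ∧ (2 ^ (i + 4))⁻¹ ≤ t := by
  have hJ : (2 : ℝ) ^ (J + 3) < t⁻¹ := (lt_inv_comm₀ ht (by positivity)).1 htJ
  obtain ⟨m, hm, hm'⟩ := exists_nat_pow_near
    ((one_le_pow₀ one_le_two).trans hJ.le) _root_.one_lt_two
  have hmJ : J + 3 < m + 1 := (pow_lt_pow_iff_right₀ _root_.one_lt_two).1 (hJ.trans hm')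
  obtain ⟨i, rfl⟩ : ∃ i, m = i + 3 := ⟨m - 3, by lia⟩
  exact ⟨i, by lia, (le_inv_comm₀ ht (by positivity)).2 hm, inv_le_of_inv_le₀ ht hm'.le⟩

lemma tendsto_setLIntegral_enorm_tsum_extensionTerm_sub (hl : 0 < l) (hφm : Measurable φ)
    (hφ : LocallyIntegrable φ) (R : ℝ) :
    Tendsto (fun y : Rn d => ∫⁻ x in ball 0 R,
      ‖(∑' j, extensionTerm d l φ j (Fin.append x y)) - φ x‖ₑ) (𝓝[≠] 0) (𝓝 0) := by
  refine ENNReal.tendsto_nhds_zero.2 fun ε hε => ?_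
  obtain ⟨J, hJ⟩ := eventually_atTop.1 (ENNReal.tendsto_nhds_zero.1
    (tendsto_setLIntegral_enorm_smoothApprox_sub hl hφm hφ R) (ε / 2) (ENNReal.half_pos hε.ne'))
  filter_upwards [self_mem_nhdsWithin, mem_nhdsWithin_of_mem_nhds
    (ball_mem_nhds 0 (show (0 : ℝ) < (2 ^ (J + 3))⁻¹ by positivity))] with y (hy : y ≠ 0) hyJ
  obtain ⟨i, hi, hup, hlow⟩ := exists_mem_dyadic_shell (norm_pos_iff.2 hy)
    (mem_ball_zero_iff.1 hyJ)
  calc _ ≤ ∫⁻ x in ball 0 R, (‖smoothApprox l φ i x - φ x‖ₑ +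
        ‖smoothApprox l φ (i + 1) x - φ x‖ₑ) :=
        lintegral_mono fun x => enorm_tsum_extensionTerm_append_sub_le l φ hup hlow x (φ x)
    _ = (∫⁻ x in ball 0 R, ‖smoothApprox l φ i x - φ x‖ₑ) +
        ∫⁻ x in ball 0 R, ‖smoothApprox l φ (i + 1) x - φ x‖ₑ :=
        lintegral_add_left
          ((contDiff_smoothApprox l hφ i).continuous.measurable.sub hφm).enorm _
    _ ≤ ε / 2 + ε / 2 := add_le_add (hJ i hi) (hJ (i + 1) (by lia))
    _ = ε := ENNReal.add_halves ε

lemma isTraceSob_tsum_extensionTerm (hd : 0 < d) (hl : 0 < l) (hφm : Measurable φ)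
    (hφ : LocallyIntegrable φ) : IsTraceSob (fun z => ∑' j, extensionTerm d l φ j z) φ :=
  isTraceSob_of_tendsto_setLIntegral hd
    (tendsto_setLIntegral_enorm_tsum_extensionTerm_sub hl hφm hφ)

lemma MemLrLoc.locallyIntegrable {r : ℝ≥0∞} (hr : 1 ≤ r) (h : MemLrLoc n r φ) :
    LocallyIntegrable φ := by
  refine locallyIntegrable_iff.2 fun K hK => ?_
  have : IsFiniteMeasure (volume.restrict K) := ⟨by simpa using hK.measure_lt_top⟩
  exact MemLp.integrable hr ⟨h.1.aestronglyMeasurable, h.2 K hK⟩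

end Extension

theorem sobolev_extension_general {n d : ℕ} (hd : 0 < d) {p r : ℝ≥0∞} (hr1 : 1 ≤ r) {p₀ : ℝ}
    (hp₀ : 1 < p₀) (hp₀p : p₀ ≤ p.toReal) {l : ℕ} (hl : 0 < l) {γ : Rn (n + d) → ℝ}
    (hγ : IsWeight γ) (hA : MemAlocGt (n + d) p₀ (fun x => γ x ^ p.toReal)) :
    ∃ C : ℝ≥0∞, 0 < C ∧ C < ∞ ∧
      ∀ φ : Rn n → ℝ, MemLrLoc n r φ →
        tildeBnormE n l p p r (gammaSeq n d p l γ) φ < ∞ →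
        ∃ (f : Rn (n + d) → ℝ) (D : (Fin (n + d) → ℕ) → Rn (n + d) → ℝ),
          MemW (n + d) p l γ f D ∧ IsTraceSob f φ ∧
          sobNorm (n + d) p l γ D ≤ C * tildeBnormE n l p p r (gammaSeq n d p l γ) φ := by
  have hpos : 0 < p.toReal := by linarith
  obtain ⟨hp0, hp⟩ : p ≠ 0 ∧ p ≠ ∞ := ENNReal.toReal_ne_zero.1 hpos.ne'
  have hw : IsWeight fun x => γ x ^ p.toReal :=
    ⟨hγ.1.pow_const _, fun x => Real.rpow_pos_of_pos (hγ.2 x) _⟩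
  choose C hC hterm using exists_enorm_iterPD_extensionTerm_le (n := n) d l hr1 hpos
  obtain ⟨C₁, hC₁, hsum⟩ := exists_memW_tsumDeriv (l := l) hγ hp0 hp hC
  obtain ⟨C₂, hC₂, hmajorant⟩ := exists_lintegral_dyadicMajorant_rpow_le hA hp₀ hw hd
    (hp₀.le.trans hp₀p)
  set C₃ : ℝ≥0∞ := (2 ^ n * 2) ^ (1 / p.toReal)
  refine ⟨C₁ * (C₂ * C₃) + 1, by simp, by finiteness, fun φ hφ hN => ?_⟩
  have hφl := hφ.locallyIntegrable hr1
  set b := oscCoeff l r p.toReal φ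
  have hnorm : (∫⁻ z, dyadicMajorant d b z ^ p.toReal ∂weightMeasure fun x => γ x ^ p.toReal) ^
      (1 / p.toReal) ≤ C₂ * C₃ * tildeBnormE n l p p r (gammaSeq n d p l γ) φ := by
    rw [mul_assoc]
    exact (hmajorant b).trans
      (mul_le_mul_right (tsum_oscCoeff_rpow_mul_weightMeasure_le hp0 hp hγ φ) _)
  have hfin := hnorm.trans_lt (by finiteness)
  have hloc := hA.exists_mem_nhds_setLIntegral_lt_top hp₀ hw hp₀p (measurable_dyadicMajorant b)
    ((ENNReal.rpow_lt_top_iff_of_pos (by positivity)).1 hfin)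
  obtain ⟨hW, hle⟩ := hsum (extensionTerm d l φ) _ (contDiff_extensionTerm d l hφl)
    (measurable_dyadicMajorant b) hloc (fun L hL => hterm L φ hφ.1 hφl hL) hfin
  refine ⟨_, _, hW, ?_, ?_⟩
  · rw [tsumDeriv_zero]
    exact isTraceSob_tsum_extensionTerm hd hl hφ.1 hφl
  · calc _ ≤ C₁ * (C₂ * C₃ * tildeBnormE n l p p r (gammaSeq n d p l γ) φ) :=
          hle.trans (mul_le_mul_right hnorm _)
      _ = C₁ * (C₂ * C₃) * tildeBnormE n l p p r (gammaSeq n d p l γ) φ := by ring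
      _ ≤ _ := mul_le_mul_left le_self_add _

/-- **Theorem 3.1, converse part: extension from `B̃^l_{p,p,r}(ℝⁿ,{γ_k})` into the weighted
Sobolev space.** -/
theorem sobolev_extension (n d : ℕ) (hn : 0 < n) (hd : 0 < d) (p r : ℝ≥0∞)
    (hp1 : 1 < p) (hp : p < ∞) (hr1 : 1 ≤ r) (hrp : r < p) (l : ℕ)
    (hl : (d : ℝ) / r.toReal < l)
    (γ : Rn (n + d) → ℝ) (hγ : IsWeight γ)
    (hA : MemAlocP (n + d) (p.toReal / r.toReal) (fun x => γ x ^ p.toReal)) :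
    ∃ C : ℝ≥0∞, 0 < C ∧ C < ∞ ∧
      ∀ φ : Rn n → ℝ, MemLrLoc n r φ →
        tildeBnormE n l p p r (gammaSeq n d p l γ) φ < ∞ →
        ∃ (f : Rn (n + d) → ℝ) (D : (Fin (n + d) → ℕ) → Rn (n + d) → ℝ),
          MemW (n + d) p l γ f D ∧ IsTraceSob f φ ∧
          sobNorm (n + d) p l γ D ≤ C * tildeBnormE n l p p r (gammaSeq n d p l γ) φ := by
  have hrt : r ≠ ∞ := (hrp.trans hp).ne
  have hr : 1 ≤ r.toReal := by simpa using ENNReal.toReal_mono hrt hr1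
  have hratio : 1 < p.toReal / r.toReal :=
    (one_lt_div (by positivity)).2 ((ENNReal.toReal_lt_toReal hrt hp.ne).2 hrp)
  have hl0 : 0 < l := by exact_mod_cast (show (0 : ℝ) ≤ d / r.toReal by positivity).trans_lt hl
  rw [MemAlocP, if_neg hratio.ne'] at hA
  exact sobolev_extension_general hd hr1 hratio (div_le_self ENNReal.toReal_nonneg hr) hl0 hγ hA

end
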